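/- arXiv:1003.5289 — 2 statements merged into one kernel-verified Lean document; each statement's English description precedes it below -/
import Mathlib

section
/- For the Weierstrass ℘-function with period lattice L_ω = ω·ℤ[τ] satisfying ℘′(z)² = 4℘(z)³ − 1, one has ℘(ω/3, L_ω) = 1, ℘′(ω/3, L_ω) = −√3, and ℘″(ω/3, L_ω) = 6. -/
noncomputable section

open Complex Real ComplexConjugate

/-- `τ = (−1+√−3)/2`, a primitive cube root of unity. -/
def tau : ℂ := (-1 + Real.sqrt 3 * Complex.I) / 2

/-- `√−3 = 1 + 2τ`, the square root of `−3` with positive imaginary part. -/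
def sqrtm3 : ℂ := Real.sqrt 3 * Complex.I

/-- The ring of integers `O_K = ℤ[τ]` of `K = ℚ(√−3)`, as a subring of `ℂ`. -/
def Eis : Subring ℂ := Subring.closure {tau}

/-- `τ` as an element of `ℤ[τ]`. -/
def tauO : Eis := ⟨tau, Subring.subset_closure rfl⟩

/-- `√−3` as an element of `ℤ[τ]`. -/
def sqrtm3O : Eis := 1 + 2 * tauO

/-- Membership in the lattice `L_ω = ω·ℤ[τ]`. -/
def inLattice (ω : ℝ) (z : ℂ) : Prop := ∃ a : Eis, z = (ω : ℂ) * a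

/-- The Weierstrass `℘`-function of the lattice `L_ω = ω·ℤ[τ]`. -/
def wp (ω : ℝ) (z : ℂ) : ℂ :=
  1 / z ^ 2 + ∑' a : {w : ℂ // inLattice ω w ∧ w ≠ 0},
    (1 / (z - (a : ℂ)) ^ 2 - 1 / (a : ℂ) ^ 2)

/-- The Weierstrass `ζ`-function of the lattice `L_ω = ω·ℤ[τ]`. -/
def wzeta (ω : ℝ) (z : ℂ) : ℂ :=
  1 / z + ∑' a : {w : ℂ // inLattice ω w ∧ w ≠ 0},
    (1 / (z - (a : ℂ)) + 1 / (a : ℂ) + z / (a : ℂ) ^ 2)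

/-- The real cube root of 2, as a complex number. -/
def cbrt2 : ℂ := ((2 : ℝ) ^ ((1 : ℝ) / 3) : ℝ)

/-- The real cube root of 4, as a complex number. -/
def cbrt4 : ℂ := ((4 : ℝ) ^ ((1 : ℝ) / 3) : ℝ)


open Filter Topology

lemma tau_re : tau.re = -1 / 2 := by simp [tau]

lemma tau_im : tau.im = Real.sqrt 3 / 2 := by simp [tau]

lemma tau_sq : tau ^ 2 = -1 - tau := by
  have h3 : Real.sqrt 3 * Real.sqrt 3 = 3 := Real.mul_self_sqrt (by norm_num)
  apply Complex.ext
  · simp [pow_two, tau_re, tau_im]; nlinarith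
  · simp [pow_two, tau_re, tau_im]; ring

lemma conj_tau : conj tau = -1 - tau := by
  apply Complex.ext
  · simp [tau_re]; norm_num
  · simp [tau_im]

/-- The period pair `(ω, ωτ)`. -/
def eisPair (ω : ℝ) (hω : 0 < ω) : PeriodPair where
  ω₁ := ω
  ω₂ := ω * tau
  indep := by
    rw [LinearIndependent.pair_iff]
    intro s u h
    have h1 := congrArg Complex.re h
    have h2 := congrArg Complex.im h
    simp [tau_re, tau_im] at h1 h2
    have h3 : Real.sqrt 3 ≠ 0 := by positivity
    have hu : u = 0 := by
      rcases h2 with h2 | h2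
      · exact h2
      · exact absurd h2 hω.ne'
    subst hu
    simp at h1
    exact ⟨h1.resolve_right hω.ne', rfl⟩

lemma mem_Eis (z : ℂ) : z ∈ Eis ↔ ∃ m n : ℤ, z = m + n * tau := by
  constructor
  · intro h
    refine Subring.closure_induction (p := fun z _ => ∃ m n : ℤ, z = m + n * tau)
      ?_ ?_ ?_ ?_ ?_ ?_ h
    · intro x hx
      rw [Set.mem_singleton_iff] at hx
      exact ⟨0, 1, by simp [hx]⟩
    · exact ⟨0, 0, by simp⟩
    · exact ⟨1, 0, by simp⟩
    · rintro x y _ _ ⟨m, n, rfl⟩ ⟨m', n', rfl⟩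
      exact ⟨m + m', n + n', by push_cast; ring⟩
    · rintro x _ ⟨m, n, rfl⟩
      exact ⟨-m, -n, by push_cast; ring⟩
    · rintro x y _ _ ⟨m, n, rfl⟩ ⟨m', n', rfl⟩
      refine ⟨m * m' - n * n', m * n' + n * m' - n * n', ?_⟩
      push_cast
      linear_combination (n * n' : ℂ) * tau_sq
  · rintro ⟨m, n, rfl⟩
    exact add_mem (intCast_mem _ _) (mul_mem (intCast_mem _ _) (Subring.subset_closure rfl))

section
variable (ω : ℝ) (hω : 0 < ω)

lemma mem_lat (z : ℂ) : z ∈ (eisPair ω hω).lattice ↔ ∃ m n : ℤ, m * (ω : ℂ) + n * (ω * tau) = z :=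
  PeriodPair.mem_lattice

lemma inLattice_iff (z : ℂ) : inLattice ω z ↔ z ∈ (eisPair ω hω).lattice := by
  rw [mem_lat]
  constructor
  · rintro ⟨⟨a, ha⟩, rfl⟩
    obtain ⟨m, n, rfl⟩ := (mem_Eis a).1 ha
    exact ⟨m, n, by push_cast; ring⟩
  · rintro ⟨m, n, rfl⟩
    exact ⟨⟨m + n * tau, (mem_Eis _).2 ⟨m, n, rfl⟩⟩, by push_cast; ring⟩

lemma wp_eq : wp ω = (eisPair ω hω).weierstrassP := by
  ext z
  have h := (eisPair ω hω).weierstrassPExcept_add 0 z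
  simp only [ZeroMemClass.coe_zero, sub_zero] at h
  rw [← h, wp, add_comm]
  simp only [ne_eq, OfNat.ofNat_ne_zero, not_false_eq_true, zero_pow, div_zero, sub_zero]
  congr 1
  rw [PeriodPair.weierstrassPExcept]
  let g : ℂ → ℂ := fun l => if l = 0 then 0 else (1 / (z - l) ^ 2 - 1 / l ^ 2)
  have e1 : ∑' l : (eisPair ω hω).lattice, (if (l : ℂ) = 0 then (0 : ℂ) else
      (1 / (z - l) ^ 2 - 1 / (l : ℂ) ^ 2)) = ∑' l : ((eisPair ω hω).lattice : Set ℂ), g l := rfl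
  have e2 : ∑' a : {w : ℂ // inLattice ω w ∧ w ≠ 0}, (1 / (z - (a : ℂ)) ^ 2 - 1 / (a : ℂ) ^ 2)
      = ∑' a : {w : ℂ | inLattice ω w ∧ w ≠ 0}, g a := by
    apply tsum_congr
    rintro ⟨a, ha⟩
    simp [g, ha.2]
  rw [e2]
  refine Eq.trans ?_ e1.symm
  rw [tsum_subtype, tsum_subtype]
  apply tsum_congr
  intro b
  by_cases hb : b = 0
  · simp [Set.indicator, hb, g]
  · have hiff : b ∈ {w : ℂ | inLattice ω w ∧ w ≠ 0} ↔ b ∈ ((eisPair ω hω).lattice : Set ℂ) := by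
      show (inLattice ω b ∧ b ≠ 0) ↔ b ∈ (eisPair ω hω).lattice
      rw [inLattice_iff ω hω]
      tauto
    by_cases hm : b ∈ ((eisPair ω hω).lattice : Set ℂ)
    · rw [Set.indicator_of_mem hm, Set.indicator_of_mem (hiff.2 hm)]
    · rw [Set.indicator_of_notMem hm, Set.indicator_of_notMem (fun h => hm (hiff.1 h))]

lemma tau_mul_mem {z : ℂ} (h : z ∈ (eisPair ω hω).lattice) : tau * z ∈ (eisPair ω hω).lattice := by
  rw [mem_lat] at *
  obtain ⟨m, n, rfl⟩ := h
  exact ⟨-n, m - n, by push_cast; linear_combination (-(n : ℂ) * ω) * tau_sq⟩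

lemma tau_cube : tau ^ 3 = 1 := by linear_combination (tau - 1) * tau_sq

lemma tau_ne_zero : tau ≠ 0 := by
  intro h; have := tau_cube; simp [h] at this

lemma conj_mem {z : ℂ} (h : z ∈ (eisPair ω hω).lattice) : conj z ∈ (eisPair ω hω).lattice := by
  rw [mem_lat] at *
  obtain ⟨m, n, rfl⟩ := h
  refine ⟨m - n, -n, ?_⟩
  simp only [map_add, map_mul, conj_tau, Complex.conj_ofReal, map_intCast]
  push_cast; ring

/-- multiplication by tau on the lattice -/
def tauEquiv : (eisPair ω hω).lattice ≃ (eisPair ω hω).lattice where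
  toFun l := ⟨tau * l, tau_mul_mem ω hω l.2⟩
  invFun l := ⟨tau * (tau * l), tau_mul_mem ω hω (tau_mul_mem ω hω l.2)⟩
  left_inv l := by
    ext
    show tau * (tau * (tau * (l : ℂ))) = l
    linear_combination (l : ℂ) * tau_cube
  right_inv l := by
    ext
    show tau * (tau * (tau * (l : ℂ))) = l
    linear_combination (l : ℂ) * tau_cube

/-- conjugation on the lattice -/
def conjEquiv : (eisPair ω hω).lattice ≃ (eisPair ω hω).lattice where
  toFun l := ⟨conj (l : ℂ), conj_mem ω hω l.2⟩
  invFun l := ⟨conj (l : ℂ), conj_mem ω hω l.2⟩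
  left_inv l := by ext; simp
  right_inv l := by ext; simp

lemma P_tau (z : ℂ) : (eisPair ω hω).weierstrassP (tau * z)
    = tau * (eisPair ω hω).weierstrassP z := by
  simp only [PeriodPair.weierstrassP]
  rw [← (tauEquiv ω hω).tsum_eq, ← tsum_mul_left]
  apply tsum_congr
  intro l
  have e : ((tauEquiv ω hω l : (eisPair ω hω).lattice) : ℂ) = tau * l := rfl
  have h2 : (tau ^ 2)⁻¹ = tau := by
    apply inv_eq_of_mul_eq_one_right
    rw [← pow_succ, tau_cube]
  rw [e, ← mul_sub, mul_pow, mul_pow]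
  simp only [one_div, mul_inv, h2]
  ring

lemma P_conj (z : ℂ) : (eisPair ω hω).weierstrassP (conj z)
    = conj ((eisPair ω hω).weierstrassP z) := by
  simp only [PeriodPair.weierstrassP]
  rw [← (conjEquiv ω hω).tsum_eq, Complex.conj_tsum]
  apply tsum_congr
  intro l
  have e : ((conjEquiv ω hω l : (eisPair ω hω).lattice) : ℂ) = conj (l : ℂ) := rfl
  rw [e]
  simp

/-- the fixed point of multiplication by tau -/
def tpt : ℂ := -(ω * (1 + 2 * tau) / 3)

lemma rat_mem (α β : ℚ) (z : ℂ) (hz : z = α * (ω : ℂ) + β * (ω * tau)) :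
    z ∈ (eisPair ω hω).lattice ↔ α.den = 1 ∧ β.den = 1 := by
  subst hz
  exact PeriodPair.mul_ω₁_add_mul_ω₂_mem_lattice (L := eisPair ω hω)

lemma t_notMem : tpt ω ∉ (eisPair ω hω).lattice := by
  rw [rat_mem ω hω (-1/3) (-2/3) _ (by simp [tpt]; ring)]
  norm_num

lemma a_notMem : (ω : ℂ) / 3 ∉ (eisPair ω hω).lattice := by
  rw [rat_mem ω hω (1/3) 0 _ (by simp; ring)]
  norm_num

lemma at_notMem : (ω : ℂ) / 3 + tpt ω ∉ (eisPair ω hω).lattice := by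
  rw [rat_mem ω hω 0 (-2/3) _ (by simp [tpt]; ring)]
  norm_num

lemma at_notMem' : (ω : ℂ) / 3 - tpt ω ∉ (eisPair ω hω).lattice := by
  rw [rat_mem ω hω (2/3) (2/3) _ (by simp [tpt]; ring)]
  norm_num

lemma P_add {z l : ℂ} (hl : l ∈ (eisPair ω hω).lattice) :
    (eisPair ω hω).weierstrassP (z + l) = (eisPair ω hω).weierstrassP z :=
  (eisPair ω hω).weierstrassP_add_coe z ⟨l, hl⟩

lemma P_t : (eisPair ω hω).weierstrassP (tpt ω) = 0 := by
  have h1 := P_tau ω hω (tpt ω)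
  have h2 : tau * tpt ω = tpt ω + (ω + ω * tau) := by
    simp only [tpt]; linear_combination (-2 / 3 * (ω : ℂ)) * tau_sq
  rw [h2, P_add ω hω (add_mem (eisPair ω hω).ω₁_mem_lattice (eisPair ω hω).ω₂_mem_lattice :
    (ω + ω * tau : ℂ) ∈ _)] at h1
  have h3 : tau - 1 ≠ 0 := by
    intro h; have := congrArg Complex.re h; simp [tau_re] at this; norm_num at this
  have : (tau - 1) * (eisPair ω hω).weierstrassP (tpt ω) = 0 := by linear_combination -h1
  exact (mul_eq_zero.1 this).resolve_left h3

lemma three_t : 3 * tpt ω ∈ (eisPair ω hω).lattice := by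
  rw [mem_lat]
  exact ⟨-1, -2, by simp [tpt]; ring⟩

lemma real_notMem {s : ℝ} (h0 : 0 < s) (h1 : s < ω) : (s : ℂ) ∉ (eisPair ω hω).lattice := by
  rw [mem_lat]
  rintro ⟨m, n, h⟩
  have hi := congrArg Complex.im h
  have hr := congrArg Complex.re h
  simp [tau_re, tau_im] at hi hr
  have h3 : Real.sqrt 3 ≠ 0 := by positivity
  have hn : n = 0 := by
    rcases hi with hi | hi
    · exact hi
    · exact absurd hi hω.ne'
  subst hn
  simp at hr
  subst hr
  have m0 : 0 < m := by
    have : (0 : ℝ) < m := by by_contra hh; nlinarith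
    exact_mod_cast this
  have m1 : m < 1 := by
    have : (m : ℝ) < 1 := by by_contra hh; nlinarith
    exact_mod_cast this
  omega

end

section
variable (ω : ℝ) (hω : 0 < ω)

/-- membership in the superlattice `L + ℤ t` -/
def inSup (z : ℂ) : Prop := z ∈ (eisPair ω hω).lattice ∨ z + tpt ω ∈ (eisPair ω hω).lattice ∨
  z - tpt ω ∈ (eisPair ω hω).lattice

open Classical in
/-- The product of three translates, with removable singularities filled in. -/
def K (z : ℂ) : ℂ := if inSup ω hω z then 1 else
  (eisPair ω hω).weierstrassP z * (eisPair ω hω).weierstrassP (z + tpt ω) *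
    (eisPair ω hω).weierstrassP (z - tpt ω)

lemma add_mem_iff' {z l : ℂ} (hl : l ∈ (eisPair ω hω).lattice) :
    z + l ∈ (eisPair ω hω).lattice ↔ z ∈ (eisPair ω hω).lattice :=
  (eisPair ω hω).lattice.toAddSubgroup.add_mem_cancel_right (y := z) hl

lemma inSup_add_lat {z l : ℂ} (hl : l ∈ (eisPair ω hω).lattice) :
    inSup ω hω (z + l) ↔ inSup ω hω z := by
  unfold inSup
  rw [add_right_comm, add_sub_right_comm, add_mem_iff' ω hω hl, add_mem_iff' ω hω hl,
    add_mem_iff' ω hω hl]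

lemma K_add_lat {z l : ℂ} (hl : l ∈ (eisPair ω hω).lattice) : K ω hω (z + l) = K ω hω z := by
  have h := inSup_add_lat ω hω (z := z) hl
  simp only [K]
  by_cases hz : inSup ω hω z
  · rw [if_pos hz, if_pos (h.2 hz)]
  rw [if_neg hz, if_neg (fun hh => hz (h.1 hh))]
  rw [add_right_comm, add_sub_right_comm, P_add ω hω hl, P_add ω hω hl, P_add ω hω hl]

lemma K_add_t (z : ℂ) : K ω hω (z + tpt ω) = K ω hω z := by
  have e : z + tpt ω + tpt ω = z - tpt ω + 3 * tpt ω := by ring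
  have h : inSup ω hω (z + tpt ω) ↔ inSup ω hω z := by
    unfold inSup
    rw [e, add_sub_cancel_right, add_mem_iff' ω hω (three_t ω hω)]
    tauto
  simp only [K]
  by_cases hz : inSup ω hω z
  · rw [if_pos hz, if_pos (h.2 hz)]
  rw [if_neg hz, if_neg (fun hh => hz (h.1 hh))]
  rw [e, add_sub_cancel_right, P_add ω hω (three_t ω hω)]
  ring

lemma isClosed_sup : IsClosed {z | inSup ω hω z} := by
  have h := (eisPair ω hω).isClosed_lattice
  have h1 : IsClosed {z : ℂ | z + tpt ω ∈ (eisPair ω hω).lattice} :=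
    h.preimage (f := fun z => z + tpt ω) (by fun_prop)
  have h2 : IsClosed {z : ℂ | z - tpt ω ∈ (eisPair ω hω).lattice} :=
    h.preimage (f := fun z => z - tpt ω) (by fun_prop)
  exact h.union (h1.union h2)

lemma P_diff {z : ℂ} (hz : z ∉ (eisPair ω hω).lattice) :
    DifferentiableAt ℂ (eisPair ω hω).weierstrassP z :=
  ((eisPair ω hω).analyticOnNhd_weierstrassP z hz).differentiableAt

lemma K_diff_of_notMem {z : ℂ} (hz : ¬ inSup ω hω z) : DifferentiableAt ℂ (K ω hω) z := by
  have hz' := hz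
  simp only [inSup, not_or] at hz'
  obtain ⟨h1, h2, h3⟩ := hz'
  have d1 := P_diff ω hω h1
  have d2 : DifferentiableAt ℂ (fun z => (eisPair ω hω).weierstrassP (z + tpt ω)) z :=
    (P_diff ω hω h2).comp z (f := fun z => z + tpt ω) (by fun_prop)
  have d3 : DifferentiableAt ℂ (fun z => (eisPair ω hω).weierstrassP (z - tpt ω)) z :=
    (P_diff ω hω h3).comp z (f := fun z => z - tpt ω) (by fun_prop)
  refine ((d1.mul d2).mul d3).congr_of_eventuallyEq ?_
  filter_upwards [(isClosed_sup ω hω).isOpen_compl.mem_nhds hz] with w hw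
  have hw' : ¬ inSup ω hω w := hw
  simp [K, hw']

lemma neg_t_notMem : -tpt ω ∉ (eisPair ω hω).lattice := by
  rw [neg_mem_iff]; exact t_notMem ω hω

lemma sup_punctured : ∀ᶠ z in 𝓝[≠] (0 : ℂ), ¬ inSup ω hω z := by
  have h1 := (eisPair ω hω).compl_lattice_sdiff_singleton_mem_nhds 0
  have ho := (eisPair ω hω).isClosed_lattice.isOpen_compl
  have h2 : ∀ᶠ z in 𝓝 (0 : ℂ), z + tpt ω ∈ ((eisPair ω hω).lattice : Set ℂ)ᶜ :=
    ContinuousAt.eventually_mem (f := fun z : ℂ => z + tpt ω) (by fun_prop)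
      (ho.mem_nhds (by simpa using t_notMem ω hω))
  have h3 : ∀ᶠ z in 𝓝 (0 : ℂ), z - tpt ω ∈ ((eisPair ω hω).lattice : Set ℂ)ᶜ :=
    ContinuousAt.eventually_mem (f := fun z : ℂ => z - tpt ω) (by fun_prop)
      (ho.mem_nhds (by simpa using t_notMem ω hω))
  filter_upwards [self_mem_nhdsWithin, mem_nhdsWithin_of_mem_nhds h1,
    mem_nhdsWithin_of_mem_nhds h2, mem_nhdsWithin_of_mem_nhds h3] with z a b c d
  simp only [inSup, not_or]
  refine ⟨fun hh => b ⟨hh, a⟩, c, d⟩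

lemma K_zero : K ω hω 0 = 1 := by simp [K, inSup]

lemma K_tendsto (hd : deriv (eisPair ω hω).weierstrassP (tpt ω) ^ 2 = -1) :
    Tendsto (K ω hω) (𝓝[≠] 0) (𝓝 1) := by
  set P := (eisPair ω hω).weierstrassP with hP
  have t1 : Tendsto (fun z => z ^ 2 * P z) (𝓝[≠] 0) (𝓝 1) := by
    have c : ContinuousAt (fun z => z ^ 2 * (eisPair ω hω).weierstrassPExcept 0 z + 1) 0 := by
      have := ((eisPair ω hω).analyticAt_weierstrassPExcept 0).continuousAt
      fun_prop
    have c' := c.tendsto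
    simp only [ne_eq, OfNat.ofNat_ne_zero, not_false_eq_true, zero_pow, zero_mul, zero_add] at c'
    refine (c'.mono_left nhdsWithin_le_nhds).congr' ?_
    filter_upwards [self_mem_nhdsWithin] with z hz
    have hz' : z ≠ 0 := hz
    have := (eisPair ω hω).ite_eq_one_sub_sq_mul_weierstrassP 0 (zero_mem _) z
    simp [hz'] at this
    exact this.symm
  have key : ∀ u : ℂ, u ∉ (eisPair ω hω).lattice → P u = 0 →
      Tendsto (fun z => z⁻¹ * P (z + u)) (𝓝[≠] 0) (𝓝 (deriv P u)) := by
    intro u hu h0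
    have := (hasDerivAt_iff_tendsto_slope_zero.1 (P_diff ω hω hu).hasDerivAt)
    refine this.congr fun z => ?_
    rw [← hP, h0, add_comm u z]; simp
  have t2 := key _ (t_notMem ω hω) (P_t ω hω)
  have hneg : P (-tpt ω) = 0 := by rw [hP, PeriodPair.weierstrassP_neg]; exact P_t ω hω
  have t3 := key _ (neg_t_notMem ω hω) hneg
  have hdn : deriv P (-tpt ω) = - deriv P (tpt ω) := by
    rw [hP, PeriodPair.deriv_weierstrassP, PeriodPair.derivWeierstrassP_neg]
  have t4 := (t1.mul t2).mul t3
  have e : (1 : ℂ) * deriv P (tpt ω) * deriv P (-tpt ω) = 1 := by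
    rw [hdn]; linear_combination -hd
  rw [e] at t4
  refine t4.congr' ?_
  filter_upwards [self_mem_nhdsWithin, sup_punctured ω hω] with z hz hs
  have hz' : z ≠ 0 := hz
  simp only [K, hs, if_false, ← hP, ← sub_eq_add_neg]
  field_simp

lemma K_diff (hd : deriv (eisPair ω hω).weierstrassP (tpt ω) ^ 2 = -1) :
    Differentiable ℂ (K ω hω) := by
  have h0 : DifferentiableAt ℂ (K ω hω) 0 := by
    refine (Complex.analyticAt_of_differentiable_on_punctured_nhds_of_continuousAt ?_ ?_
      ).differentiableAt
    · filter_upwards [sup_punctured ω hω] with z hz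
      exact K_diff_of_notMem ω hω hz
    · rw [continuousAt_iff_punctured_nhds, K_zero]
      exact K_tendsto ω hω hd
  have hshift : ∀ u : ℂ, (∀ z, K ω hω (z + u) = K ω hω z) → DifferentiableAt ℂ (K ω hω) (-u) := by
    intro u hu
    have e : K ω hω = fun z => K ω hω (z + u) := by ext z; rw [hu]
    rw [e]
    have h0' : DifferentiableAt ℂ (K ω hω) (-u + u) := by simpa using h0
    exact h0'.comp (-u) (f := fun z => z + u) (by fun_prop)
  intro z
  by_cases hz : inSup ω hω z
  · rw [← neg_neg z]
    apply hshift
    intro w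
    rcases hz with hz | hz | hz
    · exact K_add_lat ω hω (neg_mem hz)
    · have : w + -z = (w + tpt ω) + -(z + tpt ω) := by ring
      rw [this, K_add_lat ω hω (neg_mem hz), K_add_t]
    · rw [← K_add_t]
      have : w + -z + tpt ω = w + -(z - tpt ω) := by ring
      rw [this, K_add_lat ω hω (neg_mem hz)]
  · exact K_diff_of_notMem ω hω hz

lemma K_eq_one (hd : deriv (eisPair ω hω).weierstrassP (tpt ω) ^ 2 = -1) (z : ℂ) :
    K ω hω z = 1 := by
  have hK := K_diff ω hω hd
  rw [← K_zero ω hω]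
  exact hK.apply_eq_apply_of_bounded (IsZLattice.isCompact_range_of_periodic
    (eisPair ω hω).lattice _ hK.continuous fun z w hw ↦ K_add_lat ω hω hw).isBounded z 0

lemma P_a_cube (hd : deriv (eisPair ω hω).weierstrassP (tpt ω) ^ 2 = -1) :
    (eisPair ω hω).weierstrassP ((ω : ℂ) / 3) ^ 3 = 1 := by
  have h := K_eq_one ω hω hd ((ω : ℂ) / 3)
  have hn : ¬ inSup ω hω ((ω : ℂ) / 3) := by
    simp only [inSup, not_or]
    exact ⟨a_notMem ω hω, at_notMem ω hω, at_notMem' ω hω⟩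
  simp only [K, hn, if_false] at h
  have e1 : (ω : ℂ) / 3 + tpt ω = tau * (ω / 3) + (-ω * tau) := by simp only [tpt]; ring
  have e2 : (ω : ℂ) / 3 - tpt ω = tau * (tau * (ω / 3)) + (ω + ω * tau) := by
    simp only [tpt]; linear_combination (-(ω : ℂ) / 3) * tau_sq
  rw [e1, e2, P_add ω hω, P_add ω hω, P_tau, P_tau, P_tau] at h
  · linear_combination h - (eisPair ω hω).weierstrassP ((ω : ℂ) / 3) ^ 3 * tau_cube
  · exact add_mem (eisPair ω hω).ω₁_mem_lattice (eisPair ω hω).ω₂_mem_lattice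
  · rw [neg_mul]; exact neg_mem (eisPair ω hω).ω₂_mem_lattice

lemma P_real (s : ℝ) : ((eisPair ω hω).weierstrassP s).im = 0 := by
  have := P_conj ω hω s
  rw [Complex.conj_ofReal] at this
  exact Complex.conj_eq_iff_im.1 this.symm

lemma P_a (hd : deriv (eisPair ω hω).weierstrassP (tpt ω) ^ 2 = -1) :
    (eisPair ω hω).weierstrassP ((ω : ℂ) / 3) = 1 := by
  have h := P_a_cube ω hω hd
  have hi := P_real ω hω (ω / 3)
  push_cast at hi
  set x := (eisPair ω hω).weierstrassP ((ω : ℂ) / 3)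
  have hx : x = (x.re : ℂ) := Complex.ext (by simp) (by simp [hi])
  rw [hx] at h ⊢
  have h' : x.re ^ 3 = 1 := by exact_mod_cast h
  have : x.re = 1 := by
    have hf : (x.re - 1) * (x.re ^ 2 + x.re + 1) = 0 := by linear_combination h'
    rcases mul_eq_zero.1 hf with h1 | h1
    · linarith
    · nlinarith [sq_nonneg (x.re + 1 / 2)]
  simp [this]

lemma P_deriv_real {s : ℝ} (h0 : 0 < s) (h1 : s < ω) :
    HasDerivAt (fun s : ℝ => ((eisPair ω hω).weierstrassP s).re)
      (deriv (eisPair ω hω).weierstrassP s).re s ∧ (deriv (eisPair ω hω).weierstrassP s).im = 0 := by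
  have hd := (P_diff ω hω (real_notMem ω hω h0 h1)).hasDerivAt
  refine ⟨hd.real_of_complex, ?_⟩
  have h2 : HasDerivAt (fun s : ℝ => ((eisPair ω hω).weierstrassP s).im)
      (deriv (eisPair ω hω).weierstrassP s).im s := by
    have := hd.comp_ofReal
    exact (Complex.imCLM.hasFDerivAt.comp_hasDerivAt s this)
  have h3 : (fun s : ℝ => ((eisPair ω hω).weierstrassP s).im) = fun _ => 0 := by
    ext s; exact P_real ω hω s
  rw [h3] at h2
  exact h2.unique (hasDerivAt_const s 0)

end

/-- From [Qiu], (2.6): `℘(ω/3) = 1`, `℘′(ω/3) = −√3`, `℘″(ω/3) = 6`.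
Here `ω > 0` is pinned down by the differential equation `℘′² = 4℘³ − 1` for the
lattice `L_ω = ω·ℤ[τ]` (equivalently, the lattice invariants are `g₂ = 0`, `g₃ = 1`). -/
theorem wp_values_at_third_period
    (ω : ℝ) (hω : 0 < ω)
    (hODE : ∀ z : ℂ, ¬ inLattice ω z → deriv (wp ω) z ^ 2 = 4 * wp ω z ^ 3 - 1) :
    wp ω ((ω : ℂ) / 3) = 1 ∧ deriv (wp ω) ((ω : ℂ) / 3) = -(Real.sqrt 3 : ℂ) ∧
    deriv (deriv (wp ω)) ((ω : ℂ) / 3) = 6 := by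
  rw [wp_eq ω hω] at hODE ⊢
  simp only [inLattice_iff ω hω] at hODE
  set P := (eisPair ω hω).weierstrassP with hP
  have hd : deriv P (tpt ω) ^ 2 = -1 := by
    rw [hODE _ (t_notMem ω hω), hP, P_t]; norm_num
  have ha : P ((ω : ℂ) / 3) = 1 := P_a ω hω hd
  have hsq : deriv P ((ω : ℂ) / 3) ^ 2 = 3 := by
    rw [hODE _ (a_notMem ω hω), ha]; norm_num
  have h3 : ((Real.sqrt 3 : ℝ) : ℂ) ^ 2 = 3 := by
    have : Real.sqrt 3 ^ 2 = 3 := Real.sq_sqrt (by norm_num)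
    exact_mod_cast this
  have hs3 : 0 < Real.sqrt 3 := by positivity
  have hda : deriv P ((ω : ℂ) / 3) = -(Real.sqrt 3 : ℂ) := by
    have hsq' : deriv P ((ω : ℂ) / 3) ^ 2 = ((Real.sqrt 3 : ℝ) : ℂ) ^ 2 := by rw [hsq, h3]
    rcases sq_eq_sq_iff_eq_or_eq_neg.1 hsq' with h | h
    swap
    · exact h
    exfalso
    -- the real restriction
    let r : ℝ → ℝ := fun s => (P s).re
    have hr : ∀ s : ℝ, 0 < s → s < ω → HasDerivAt r (deriv P s).re s := fun s h0 h1 =>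
      (P_deriv_real ω hω h0 h1).1
    have hra : r (ω / 3) = 1 := by
      simp only [r]; push_cast; rw [ha]; simp
    have hrb : r (2 * ω / 3) = 1 := by
      simp only [r]
      have e : ((2 * ω / 3 : ℝ) : ℂ) = -(ω / 3) + ω := by push_cast; ring
      have hm : (ω : ℂ) ∈ (eisPair ω hω).lattice := (eisPair ω hω).ω₁_mem_lattice
      rw [e, hP, P_add ω hω hm, PeriodPair.weierstrassP_neg, ← hP, ha]
      simp
    have hpos : ∀ᶠ s in 𝓝[>] (ω / 3), 0 < slope r (ω / 3) s := by
      have h1 := hr (ω / 3) (by linarith) (by linarith)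
      have h2 : (0 : ℝ) < (deriv P ((ω / 3 : ℝ) : ℂ)).re := by
        push_cast; rw [h]; simpa using hs3
      have h4 := (hasDerivAt_iff_tendsto_slope.1 h1).eventually (lt_mem_nhds h2)
      exact h4.filter_mono (nhdsWithin_mono _ (fun x hx => ne_of_gt hx))
    have hlt : ∀ᶠ s in 𝓝[>] (ω / 3), s ∈ Set.Ioo (ω / 3) (2 * ω / 3) :=
      Ioo_mem_nhdsGT (by linarith)
    obtain ⟨s, hs1, hs2⟩ := (hpos.and hlt).exists
    have hs4 : 1 < r s := by
      rw [slope_def_field, hra] at hs1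
      have : 0 < s - ω / 3 := by linarith [hs2.1]
      have := (div_pos_iff_of_pos_right this).1 hs1
      linarith
    have hcont : ContinuousOn r (Set.Icc (ω / 3) (2 * ω / 3)) := fun x hx =>
      (hr x (by linarith [hx.1]) (by linarith [hx.2])).continuousAt.continuousWithinAt
    obtain ⟨m, hm, hmax⟩ := isCompact_Icc.exists_isMaxOn ⟨s, hs2.1.le, hs2.2.le⟩ hcont
    have hms : r s ≤ r m := hmax ⟨hs2.1.le, hs2.2.le⟩
    have hm1 : ω / 3 < m := lt_of_le_of_ne hm.1 (by rintro rfl; linarith)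
    have hm2 : m < 2 * ω / 3 := lt_of_le_of_ne hm.2 (by rintro rfl; linarith)
    have hloc : IsLocalMax r m := hmax.isLocalMax (Icc_mem_nhds hm1 hm2)
    have hm0 : 0 < m := by linarith
    have hmω : m < ω := by linarith
    have hz := hloc.hasDerivAt_eq_zero (hr m hm0 hmω)
    have hz' : deriv P m = 0 := Complex.ext hz (P_deriv_real ω hω hm0 hmω).2
    have hO := hODE m (real_notMem ω hω hm0 hmω)
    have hPm : P m = (r m : ℂ) := Complex.ext (by simp [r]) (by simpa using P_real ω hω m)
    rw [hz', hPm] at hO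
    have hO' : (0 : ℝ) ^ 2 = 4 * r m ^ 3 - 1 := by exact_mod_cast hO
    have : 1 < r m ^ 3 := one_lt_pow₀ (by linarith) (by norm_num)
    linarith
  refine ⟨ha, hda, ?_⟩
  have hne : deriv P ((ω : ℂ) / 3) ≠ 0 := by
    intro h; rw [h] at hsq; norm_num at hsq
  have hA := (eisPair ω hω).analyticOnNhd_weierstrassP _ (a_notMem ω hω)
  have d1 := hA.differentiableAt.hasDerivAt
  have d2 := hA.deriv.differentiableAt.hasDerivAt
  have e : (fun z => deriv P z ^ 2) =ᶠ[𝓝 ((ω : ℂ) / 3)] fun z => 4 * P z ^ 3 - 1 := by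
    filter_upwards [(eisPair ω hω).isClosed_lattice.isOpen_compl.mem_nhds (a_notMem ω hω)] with z hz
    exact hODE z hz
  have f1 := d2.pow 2
  have f2 := ((d1.pow 3).const_mul 4).sub_const 1
  have f3 := f1.unique (f2.congr_of_eventuallyEq e)
  rw [← hP] at f3
  simp only [ha] at f3
  have : deriv P ((ω : ℂ) / 3) * (deriv (deriv P) ((ω : ℂ) / 3) - 6) = 0 := by
    push_cast at f3
    linear_combination f3 / 2
  have := (mul_eq_zero.1 this).resolve_left hne
  linear_combination this
end
end

section
/- For the Weierstrass zeta function of the lattice L_ω = ω·ℤ[τ] with invariants g₂ = 0, g₃ = 1, one has ζ(5ω/6, L_ω) = 5π/(3√3·ω) + 1/√3 + √3/(∛2 − 2). -/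
noncomputable section

open Complex Real ComplexConjugate

namespace WZ

open Filter Topology PeriodPair

def term (l z : ℂ) : ℂ := 1 / (z - l) + 1 / l + z / l ^ 2

def zE (L : PeriodPair) (l₀ z : ℂ) : ℂ := ∑' l : L.lattice, if l.1 = l₀ then 0 else term l.1 z

def zt (L : PeriodPair) (z : ℂ) : ℂ := ∑' l : L.lattice, term l.1 z

lemma term_bound (r : ℝ) (hr : 0 < r) (s : ℂ) (hs : ‖s‖ < r) (l : ℂ) (h : 2 * r ≤ ‖l‖) :
    ‖term l s‖ ≤ 2 * r ^ 2 * ‖l‖ ^ (-3 : ℝ) := by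
  have h0 : s - l ≠ 0 := by
    intro h1
    rw [sub_eq_zero] at h1
    subst h1
    linarith
  have h1 : 0 < ‖l‖ := by linarith
  have h2 : l ≠ 0 := norm_pos_iff.mp h1
  have e : term l s = s ^ 2 / ((s - l) * l ^ 2) := by
    unfold term
    field_simp
    ring
  rw [e, norm_div, norm_mul, norm_pow, norm_pow]
  have h3 : ‖l‖ / 2 ≤ ‖s - l‖ := by
    rw [norm_sub_rev]
    exact .trans (by linarith) (norm_sub_norm_le l s)
  calc ‖s‖ ^ 2 / (‖s - l‖ * ‖l‖ ^ 2) ≤ r ^ 2 / (‖l‖ / 2 * ‖l‖ ^ 2) := by gcongr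
    _ = 2 * r ^ 2 / ‖l‖ ^ 3 := by field_simp
    _ = _ := by norm_cast

lemma hsl_zE (L : PeriodPair) (l₀ : ℂ) :
    HasSumLocallyUniformly
      (fun (l : L.lattice) (z : ℂ) ↦ if l.1 = l₀ then 0 else term l.1 z) (zE L l₀) := by
  refine L.hasSumLocallyUniformly_aux (u := fun r l => 2 * r ^ 2 * ‖l‖ ^ (-3 : ℝ)) _
    (fun _ _ ↦ (ZLattice.summable_norm_rpow _ _ (by simp; norm_num)).mul_left _) fun r hr ↦
    Filter.eventually_atTop.mpr ⟨2 * r, ?_⟩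
  rintro _ h s hs l rfl
  split_ifs
  · simpa using! show 0 ≤ 2 * r ^ 2 * (‖(l : ℂ)‖ ^ 3)⁻¹ by positivity
  · exact term_bound r hr s hs l h

lemma hasDerivAt_term (l z : ℂ) (h : z ≠ l) :
    HasDerivAt (term l) (-(1 / (z - l) ^ 2 - 1 / l ^ 2)) z := by
  have h0 : z - l ≠ 0 := sub_ne_zero.mpr h
  have h1 : HasDerivAt (fun z : ℂ => (z - l)⁻¹) (-1 / (z - l) ^ 2) z :=
    ((hasDerivAt_id z).sub_const l).inv h0
  have h2 : HasDerivAt (fun z : ℂ => z / l ^ 2) (1 / l ^ 2) z := (hasDerivAt_id z).div_const _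
  have h3 := (h1.add_const (1 / l)).add h2
  have e1 : term l = (fun x => (x - l)⁻¹ + 1 / l) + fun z => z / l ^ 2 := by
    ext w
    simp [term]
  have e2 : -(1 / (z - l) ^ 2 - 1 / l ^ 2) = -1 / (z - l) ^ 2 + 1 / l ^ 2 := by ring
  rw [e1, e2]
  exact h3

lemma zE_diff_deriv (L : PeriodPair) (l₀ : ℂ) :
    DifferentiableOn ℂ (zE L l₀) (L.lattice \ {l₀})ᶜ ∧
    Set.EqOn (deriv (zE L l₀)) (fun z => - weierstrassPExcept L l₀ z) (L.lattice \ {l₀})ᶜ := by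
  have key : ∀ (i : L.lattice) (x : ℂ), x ∈ ((L.lattice : Set ℂ) \ {l₀})ᶜ →
      HasDerivAt (fun z ↦ if i.1 = l₀ then 0 else term i.1 z)
        (-(if i.1 = l₀ then 0 else (1 / (x - i) ^ 2 - 1 / (i : ℂ) ^ 2))) x := by
    intro i x hx
    split_ifs with h
    · simpa using hasDerivAt_const x (0 : ℂ)
    · refine hasDerivAt_term _ _ ?_
      rintro rfl
      exact hx ⟨i.2, h⟩
  have hd : ∀ s : Finset L.lattice, DifferentiableOn ℂ
      (fun z => ∑ i ∈ s, if i.1 = l₀ then 0 else term i.1 z) (L.lattice \ {l₀})ᶜ := fun s =>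
    .fun_sum fun i _ x hx => (key i x hx).differentiableAt.differentiableWithinAt
  refine ⟨(hsl_zE L l₀).hasSumLocallyUniformlyOn.differentiableOn (.of_forall fun s ↦ hd s)
    L.isOpen_compl_lattice_sdiff, ?_⟩
  refine ((hsl_zE L l₀).tendstoLocallyUniformlyOn.deriv
    (.of_forall fun s ↦ hd s) L.isOpen_compl_lattice_sdiff).unique ?_
  have := (L.hasSumLocallyUniformly_weierstrassPExcept l₀).tendstoLocallyUniformlyOn
    (s := (L.lattice \ {l₀})ᶜ)
  have h2 : TendstoLocallyUniformlyOn (fun (s : Finset L.lattice) (z : ℂ) => -∑ i ∈ s,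
      (if i.1 = l₀ then 0 else (1 / (z - i) ^ 2 - 1 / (i : ℂ) ^ 2)))
      (fun z => - weierstrassPExcept L l₀ z) atTop (L.lattice \ {l₀})ᶜ := by
    simpa using! this.neg
  refine h2.congr ?_
  intro s z hz
  simp only [Function.comp_apply]
  rw [deriv_fun_sum (fun i _ => (key i z hz).differentiableAt), ← Finset.sum_neg_distrib]
  exact Finset.sum_congr rfl fun i _ => ((key i z hz).deriv).symm

lemma hasDerivAt_zE (L : PeriodPair) (l₀ z : ℂ) (hz : z ∈ ((L.lattice : Set ℂ) \ {l₀})ᶜ) :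
    HasDerivAt (zE L l₀) (- weierstrassPExcept L l₀ z) z := by
  have := ((zE_diff_deriv L l₀).1.differentiableAt
    (L.isOpen_compl_lattice_sdiff.mem_nhds hz)).hasDerivAt
  rwa [(zE_diff_deriv L l₀).2 hz] at this

lemma zE_of_notMem (L : PeriodPair) (l₀ : ℂ) (h : l₀ ∉ L.lattice) : zE L l₀ = zt L := by
  ext z
  unfold zE zt
  refine tsum_congr fun l => if_neg ?_
  rintro rfl
  exact h l.2

lemma summable_zt (L : PeriodPair) (z : ℂ) : Summable (fun l : L.lattice => term l.1 z) := by
  have := ((hsl_zE L (L.ω₁ / 2)).hasSum (x := z)).summable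
  refine this.congr fun l => if_neg ?_
  intro h
  exact L.ω₁_div_two_notMem_lattice (h ▸ l.2)

lemma hasDerivAt_zt (L : PeriodPair) (z : ℂ) (hz : z ∉ L.lattice) :
    HasDerivAt (zt L) (- weierstrassP L z) z := by
  have h := hasDerivAt_zE L (L.ω₁ / 2) z (fun h => hz h.1)
  rwa [zE_of_notMem _ _ L.ω₁_div_two_notMem_lattice,
    L.weierstrassPExcept_of_notMem _ L.ω₁_div_two_notMem_lattice] at h

lemma zE_add (L : PeriodPair) (l₀ : L.lattice) (z : ℂ) :
    zE L l₀ z + term l₀ z = zt L z := by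
  unfold zE zt
  rw [(summable_zt L z).tsum_eq_add_tsum_ite l₀, add_comm]
  congr 1
  refine tsum_congr fun l => ?_
  by_cases h : l = l₀
  · rw [if_pos h, if_pos (congrArg _ h)]
  · rw [if_neg h, if_neg (fun h' => h (Subtype.ext h'))]

lemma zt_neg (L : PeriodPair) (z : ℂ) : zt L (-z) = - zt L z := by
  unfold zt
  rw [← (Equiv.neg L.lattice).tsum_eq, ← tsum_neg]
  refine tsum_congr fun l => ?_
  simp only [Equiv.neg_apply, NegMemClass.coe_neg, term]
  rw [show -z - -(l : ℂ) = -(z - l) by ring]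
  simp only [div_neg, neg_div, neg_sq]
  ring

lemma zE_zero_zero (L : PeriodPair) : zE L 0 0 = 0 := by
  unfold zE
  refine (tsum_congr fun l => ?_).trans tsum_zero
  split_ifs
  · rfl
  · simp [term]

lemma isPreconnected_compl (L : PeriodPair) : IsPreconnected ((L.lattice : Set ℂ)ᶜ) := by
  refine (Set.Countable.isConnected_compl_of_one_lt_rank (E := ℂ) (by simp [Complex.rank_real_complex]) ?_).isPreconnected
  have : Countable L.lattice := L.latticeEquivProd.toEquiv.countable_iff.mpr inferInstance
  exact Set.countable_coe_iff.mp this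

lemma zt_add (L : PeriodPair) (l : L.lattice) :
    ∃ c : ℂ, ∀ z, z ∉ L.lattice → zt L (z + l) = zt L z + c := by
  have hmem : ∀ z : ℂ, z ∉ L.lattice → z + l ∉ L.lattice := fun z hz h =>
    hz (by simpa using L.lattice.sub_mem h l.2)
  have hd : ∀ z : ℂ, z ∉ L.lattice → HasDerivAt (fun z => zt L (z + l) - zt L z) 0 z := by
    intro z hz
    have h1 := (hasDerivAt_zt L (z + l) (hmem z hz)).comp_add_const z (l : ℂ)
    have h2 := h1.sub (hasDerivAt_zt L z hz)
    rw [L.weierstrassP_add_coe, sub_self] at h2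
    exact h2
  obtain ⟨a, ha⟩ := L.isClosed_lattice.isOpen_compl.exists_is_const_of_deriv_eq_zero
    (isPreconnected_compl L) (fun z hz => (hd z hz).differentiableAt.differentiableWithinAt)
    (fun z hz => (hd z hz).deriv)
  exact ⟨a, fun z hz => by rw [← ha z hz]; ring⟩

end WZ

namespace WZ

open Filter Topology PeriodPair

lemma eq_of_ne {f g : ℂ → ℂ} {p : ℂ} (hf : ContinuousAt f p) (hg : ContinuousAt g p)
    (h : f =ᶠ[𝓝[≠] p] g) : f p = g p := by
  have h1 : Tendsto f (𝓝[≠] p) (𝓝 (f p)) := hf.tendsto.mono_left nhdsWithin_le_nhds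
  have h2 : Tendsto g (𝓝[≠] p) (𝓝 (g p)) := hg.tendsto.mono_left nhdsWithin_le_nhds
  exact tendsto_nhds_unique (h1.congr' h) h2

lemma exists_slope {f : ℂ → ℂ} {p : ℂ} (hf : AnalyticAt ℂ f p) :
    ∃ k : ℂ → ℂ, AnalyticAt ℂ k p ∧ k p = deriv f p ∧ ∀ z, f z = f p + (z - p) * k z := by
  obtain ⟨q, hq⟩ := hf
  refine ⟨dslope f p, ⟨_, hq.has_fpower_series_dslope_fslope⟩, dslope_same f p, fun z => ?_⟩
  have := sub_smul_dslope f p z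
  rw [smul_eq_mul] at this
  rw [this]
  ring

lemma patch (F : ℂ → ℂ) (h : ∀ p, ∃ A : ℂ → ℂ, AnalyticAt ℂ A p ∧ F =ᶠ[𝓝[≠] p] A) :
    ∃ g : ℂ → ℂ, Differentiable ℂ g ∧ ∀ p, F =ᶠ[𝓝[≠] p] g := by
  choose A hA hF using h
  have key : ∀ p, ∀ᶠ z in 𝓝 p, A z z = A p z := by
    intro p
    have h1 : ∀ᶠ z in 𝓝[≠] p, ∀ᶠ w in 𝓝[≠] z, F w = A p w := by
      have h0 := eventually_eventually_nhdsWithin.mpr (hF p)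
      filter_upwards [h0, self_mem_nhdsWithin] with z hz hzp
      rw [IsOpen.nhdsWithin_eq isOpen_compl_singleton hzp] at hz
      exact hz.filter_mono nhdsWithin_le_nhds
    have h2 : ∀ᶠ z in 𝓝[≠] p, A z z = A p z := by
      filter_upwards [h1, (hA p).eventually_analyticAt.filter_mono nhdsWithin_le_nhds] with z hz hz2
      refine eq_of_ne (hA z).continuousAt hz2.continuousAt ?_
      filter_upwards [hz, hF z] with w h3 h4
      rw [← h3, ← h4]
    rw [eventually_nhdsWithin_iff] at h2
    filter_upwards [h2] with z hz
    by_cases hzp : z = p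
    · rw [hzp]
    · exact hz hzp
  refine ⟨fun z => A z z, fun p => ?_, fun p => ?_⟩
  · exact (hA p).differentiableAt.congr_of_eventuallyEq (key p)
  · filter_upwards [hF p, (key p).filter_mono nhdsWithin_le_nhds] with z h1 h2
    rw [h1, h2]

lemma ev_notMem (L : PeriodPair) (p : ℂ) : ∀ᶠ z in 𝓝[≠] p, z ∉ L.lattice := by
  filter_upwards [mem_nhdsWithin_of_mem_nhds (L.compl_lattice_sdiff_singleton_mem_nhds p),
    self_mem_nhdsWithin] with z hz hzp hzl
  exact hz ⟨hzl, hzp⟩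

lemma tendsto_add_ne (p v : ℂ) : Tendsto (fun z => z + v) (𝓝[≠] p) (𝓝[≠] (p + v)) := by
  refine tendsto_nhdsWithin_of_tendsto_nhds_of_eventually_within _ ?_ ?_
  · exact (Continuous.tendsto (by fun_prop) p).mono_left nhdsWithin_le_nhds
  · filter_upwards [self_mem_nhdsWithin] with z hz
    simpa using hz

lemma tendsto_neg_ne (p : ℂ) : Tendsto (fun z => -z) (𝓝[≠] p) (𝓝[≠] (-p)) := by
  refine tendsto_nhdsWithin_of_tendsto_nhds_of_eventually_within _ ?_ ?_
  · exact (Continuous.tendsto (by fun_prop) p).mono_left nhdsWithin_le_nhds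
  · filter_upwards [self_mem_nhdsWithin] with z hz
    simpa using hz

lemma zt_analyticAt (L : PeriodPair) (p : ℂ) (hp : p ∉ L.lattice) : AnalyticAt ℂ (zt L) p := by
  have : DifferentiableOn ℂ (zt L) (L.lattice : Set ℂ)ᶜ := fun z hz =>
    (hasDerivAt_zt L z hz).differentiableAt.differentiableWithinAt
  exact this.analyticAt (L.isClosed_lattice.isOpen_compl.mem_nhds hp)

lemma zE_analyticAt (L : PeriodPair) (p : ℂ) : AnalyticAt ℂ (zE L p) p :=
  (zE_diff_deriv L p).1.analyticAt (L.compl_lattice_sdiff_singleton_mem_nhds p)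

lemma zt_pole (L : PeriodPair) (p : ℂ) : ∃ (c : ℂ) (A : ℂ → ℂ), AnalyticAt ℂ A p ∧
    ∀ z, zt L z = c / (z - p) + A z := by
  by_cases hp : p ∈ L.lattice
  · refine ⟨1, fun z => zE L p z + 1 / p + z / p ^ 2, ?_, fun z => ?_⟩
    · have := zE_analyticAt L p
      have h2 : AnalyticAt ℂ (fun z : ℂ => z / p ^ 2) p := by
        simp only [div_eq_mul_inv]
        fun_prop
      fun_prop
    · rw [← zE_add L ⟨p, hp⟩ z]
      simp only [term]
      ring
  · exact ⟨0, zt L, zt_analyticAt L p hp, fun z => by simp⟩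

lemma zt_pole_add (L : PeriodPair) (p v : ℂ) : ∃ (c : ℂ) (A : ℂ → ℂ), AnalyticAt ℂ A p ∧
    ∀ z, zt L (z + v) = c / (z - p) + A z := by
  obtain ⟨c, A, hA, h⟩ := zt_pole L (p + v)
  refine ⟨c, fun z => A (z + v), ?_, fun z => ?_⟩
  · exact AnalyticAt.comp (g := A) (f := fun z => z + v) hA (by fun_prop)
  · rw [h]
    congr 2
    ring

def FF (L : PeriodPair) (v z : ℂ) : ℂ :=
  (zt L (z + -v) + zt L (z + v) - 2 * zt L z) * (weierstrassP L z - weierstrassP L v)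
    - derivWeierstrassP L z

lemma FF_periodic (L : PeriodPair) (v z : ℂ) (l : L.lattice) (h1 : z ∉ L.lattice)
    (h2 : z + v ∉ L.lattice) (h3 : z + -v ∉ L.lattice) : FF L v (z + l) = FF L v z := by
  obtain ⟨c, hc⟩ := zt_add L l
  unfold FF
  rw [L.weierstrassP_add_coe, L.derivWeierstrassP_add_coe, hc z h1,
    show z + (l : ℂ) + -v = (z + -v) + l by ring, show z + (l : ℂ) + v = (z + v) + l by ring,
    hc _ h2, hc _ h3]
  ring

lemma FF_neg (L : PeriodPair) (v z : ℂ) : FF L v (-z) = - FF L v z := by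
  unfold FF
  rw [L.weierstrassP_neg, L.derivWeierstrassP_neg, zt_neg,
    show -z + -v = -(z + v) by ring, show -z + v = -(z + -v) by ring, zt_neg, zt_neg]
  ring

lemma FF_zero (L : PeriodPair) (v : ℂ) (hv : v ∉ L.lattice) :
    ∃ A : ℂ → ℂ, AnalyticAt ℂ A 0 ∧ FF L v =ᶠ[𝓝[≠] 0] A := by
  have hv' : -v ∉ L.lattice := fun h => hv (by simpa using L.lattice.neg_mem h)
  set R : ℂ → ℂ := fun z => zt L (z + -v) + zt L (z + v) - 2 * zE L 0 z with hR
  have h1 : AnalyticAt ℂ (fun z => zt L (z + -v)) 0 :=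
    AnalyticAt.comp (g := zt L) (f := fun z => z + -v) (by simpa using zt_analyticAt L _ hv')
      (by fun_prop)
  have h2 : AnalyticAt ℂ (fun z => zt L (z + v)) 0 :=
    AnalyticAt.comp (g := zt L) (f := fun z => z + v) (by simpa using zt_analyticAt L _ hv)
      (by fun_prop)
  have h3 := zE_analyticAt L 0
  have hRa : AnalyticAt ℂ R 0 := by fun_prop
  have hR0 : R 0 = 0 := by simp [hR, zt_neg, zE_zero_zero]
  have hRd : HasDerivAt R (-2 * weierstrassP L v) 0 := by
    have d1 : HasDerivAt (fun z => zt L (z + -v)) (-weierstrassP L (0 + -v)) 0 :=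
      (hasDerivAt_zt L (0 + -v) (by simpa using hv')).comp_add_const 0 (-v)
    have d2 : HasDerivAt (fun z => zt L (z + v)) (-weierstrassP L (0 + v)) 0 :=
      (hasDerivAt_zt L (0 + v) (by simpa using hv)).comp_add_const 0 v
    have d3 := (hasDerivAt_zE L 0 0 (by simp)).const_mul 2
    have d4 := (d1.add d2).sub d3
    rw [zero_add, zero_add, L.weierstrassP_neg, L.weierstrassPExcept_zero] at d4
    have e : -2 * weierstrassP L v = -weierstrassP L v + -weierstrassP L v - 2 * -0 := by ring
    rw [e]
    exact d4
  obtain ⟨k, hk, hk0, hkz⟩ := exists_slope hRa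
  rw [hRd.deriv] at hk0
  obtain ⟨n, hn, -, hnz⟩ := exists_slope hk
  have hb := L.analyticAt_weierstrassPExcept 0
  obtain ⟨m, hm, -, hmz⟩ := exists_slope hb
  have hd := L.analyticAt_derivWeierstrassPExcept 0
  refine ⟨fun z => R z * (weierstrassPExcept L 0 z - weierstrassP L v) + n z - 2 * m z
    - derivWeierstrassPExcept L 0 z, by fun_prop, ?_⟩
  filter_upwards [self_mem_nhdsWithin] with z hz
  have hz : z ≠ 0 := hz
  have e1 := zE_add L 0 z
  have e2 := L.weierstrassPExcept_add 0 z
  have e3 := L.derivWeierstrassPExcept_sub 0 z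
  simp only [ZeroMemClass.coe_zero, term, sub_zero, div_zero, add_zero] at e1 e2 e3
  have e4 := hkz z
  have e5 := hnz z
  have e6 := hmz z
  rw [L.weierstrassPExcept_zero] at e6
  rw [hk0] at e5
  rw [hR0] at e4
  have e7 : zt L (z + -v) + zt L (z + v) = R z + 2 * zE L 0 z := by simp only [hR]; ring
  unfold FF
  rw [e7, ← e1, ← e2, ← e3, e4, e5, e6]
  norm_num
  field_simp
  ring

lemma FF_exists (L : PeriodPair) (v : ℂ) (hv : v ∉ L.lattice) (p : ℂ) :
    ∃ A : ℂ → ℂ, AnalyticAt ℂ A p ∧ FF L v =ᶠ[𝓝[≠] p] A := by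
  by_cases hp : p ∈ L.lattice
  · obtain ⟨A, hA, h⟩ := FF_zero L v hv
    refine ⟨fun z => A (z + -p), AnalyticAt.comp (g := A) (f := fun z => z + -p) (by simpa using hA)
      (by fun_prop), ?_⟩
    have t := tendsto_add_ne p (-p)
    rw [add_neg_cancel] at t
    filter_upwards [t.eventually h, ev_notMem L p, (tendsto_add_ne p v).eventually (ev_notMem L _),
      (tendsto_add_ne p (-v)).eventually (ev_notMem L _)] with z h1 h2 h3 h4
    rw [← h1]
    exact (FF_periodic L v z ⟨-p, L.lattice.neg_mem hp⟩ h2 h3 h4).symm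
  · have hb := L.analyticOnNhd_weierstrassP _ hp
    have hd := L.analyticOnNhd_derivWeierstrassP _ hp
    have hz := zt_analyticAt L p hp
    by_cases h : p + v ∈ L.lattice ∨ p + -v ∈ L.lattice
    · have hPv : weierstrassP L p = weierstrassP L v := by
        rcases h with h | h
        · have := L.weierstrassP_add_coe (-v) ⟨_, h⟩
          rw [L.weierstrassP_neg] at this
          rw [← this]
          congr 1
          simp
        · have := L.weierstrassP_add_coe v ⟨_, h⟩
          rw [← this]
          congr 1
          simp
      obtain ⟨c1, A1, hA1, h1⟩ := zt_pole_add L p v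
      obtain ⟨c2, A2, hA2, h2⟩ := zt_pole_add L p (-v)
      obtain ⟨k, hk, -, hkz⟩ := exists_slope hb
      refine ⟨fun z => (c1 + c2) * k z + (A1 z + A2 z - 2 * zt L z) *
        (weierstrassP L z - weierstrassP L v) - derivWeierstrassP L z, by fun_prop, ?_⟩
      filter_upwards [self_mem_nhdsWithin] with z hzp
      have hzp : z - p ≠ 0 := sub_ne_zero.mpr hzp
      unfold FF
      rw [h1, h2, hkz z, hPv]
      field_simp
      ring
    · push Not at h
      have h1 : AnalyticAt ℂ (fun z => zt L (z + -v)) p :=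
        AnalyticAt.comp (g := zt L) (f := fun z => z + -v) (zt_analyticAt L _ h.2) (by fun_prop)
      have h2 : AnalyticAt ℂ (fun z => zt L (z + v)) p :=
        AnalyticAt.comp (g := zt L) (f := fun z => z + v) (zt_analyticAt L _ h.1) (by fun_prop)
      exact ⟨FF L v, by unfold FF; fun_prop, EventuallyEq.rfl⟩

/-- the addition-type formula -/
lemma zeta_formula (L : PeriodPair) (v z : ℂ) (hv : v ∉ L.lattice) (hz : z ∉ L.lattice)
    (h1 : z + v ∉ L.lattice) (h2 : z + -v ∉ L.lattice) :
    (zt L (z + -v) + zt L (z + v) - 2 * zt L z) * (weierstrassP L z - weierstrassP L v)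
     = derivWeierstrassP L z := by
  obtain ⟨g, hg, hF⟩ := patch (FF L v) (FF_exists L v hv)
  have hgc : ∀ w, ContinuousAt g w := fun w => hg.continuous.continuousAt
  have hper : ∀ (w : ℂ) (l : L.lattice), g (w + l) = g w := by
    intro w l
    refine eq_of_ne (f := fun w => g (w + l)) (g := g) ?_ (hgc w) ?_
    · exact (hg.continuous.comp (continuous_add_const (l : ℂ))).continuousAt
    filter_upwards [ev_notMem L w, (tendsto_add_ne w v).eventually (ev_notMem L _),
      (tendsto_add_ne w (-v)).eventually (ev_notMem L _), hF w,
      (tendsto_add_ne w l).eventually (hF _)] with x a1 a2 a3 a4 a5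
    rw [← a4, ← a5]
    exact FF_periodic L v x l a1 a2 a3
  have hodd : ∀ w, g (-w) = - g w := by
    intro w
    refine eq_of_ne (f := fun w => g (-w)) (g := fun w => - g w) ?_ (hgc w).neg ?_
    · exact (hg.continuous.comp continuous_neg).continuousAt
    filter_upwards [hF w, (tendsto_neg_ne w).eventually (hF _)] with x a4 a5
    rw [← a4, ← a5, FF_neg]
  have hconst := hg.apply_eq_apply_of_bounded (IsZLattice.isCompact_range_of_periodic L.lattice _
    hg.continuous fun z w hw ↦ hper z ⟨w, hw⟩).isBounded
  have hzero : g z = 0 := by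
    have a := hodd z
    rw [hconst (-z) z] at a
    exact CharZero.eq_neg_self_iff.mp a
  have hFz : FF L v z = g z := by
    refine eq_of_ne ?_ (hgc z) (hF z)
    have e1 : AnalyticAt ℂ (fun z => zt L (z + -v)) z :=
      AnalyticAt.comp (g := zt L) (f := fun z => z + -v) (zt_analyticAt L _ h2) (by fun_prop)
    have e2 : AnalyticAt ℂ (fun z => zt L (z + v)) z :=
      AnalyticAt.comp (g := zt L) (f := fun z => z + v) (zt_analyticAt L _ h1) (by fun_prop)
    have hb := L.analyticOnNhd_weierstrassP _ hz
    have hd := L.analyticOnNhd_derivWeierstrassP _ hz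
    have hz := zt_analyticAt L z hz
    have : AnalyticAt ℂ (FF L v) z := by unfold FF; fun_prop
    exact this.continuousAt
  rw [hzero] at hFz
  unfold FF at hFz
  exact sub_eq_zero.mp hFz

end WZ

namespace WZ

open Filter Topology PeriodPair EisensteinSeries

lemma sqrt3_sq : (Real.sqrt 3 : ℂ) ^ 2 = 3 := by
  rw [← Complex.ofReal_pow, Real.sq_sqrt (by norm_num)]; norm_num

lemma tau_sq : tau ^ 2 = -1 - tau := by
  unfold tau
  linear_combination (1/4 : ℂ) * (Real.sqrt 3 : ℂ)^2 * Complex.I_sq - (1/4 : ℂ) * sqrt3_sq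

lemma tau_re : tau.re = -1 / 2 := by simp [tau]

lemma tau_im : tau.im = Real.sqrt 3 / 2 := by simp [tau]

lemma tau_im_pos : 0 < tau.im := by rw [tau_im]; positivity

lemma tau_ne : tau ≠ 0 := by
  intro h; have := tau_im_pos; rw [h] at this; simp at this

lemma tau_indep (ω : ℝ) (hω : 0 < ω) : LinearIndependent ℝ ![(ω : ℂ), (ω : ℂ) * tau] := by
  rw [LinearIndependent.pair_iff]
  intro s t h
  have h1 := congrArg Complex.im h
  have h2 := congrArg Complex.re h
  have := tau_im_pos
  simp at h1 h2
  have ht : t = 0 := by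
    rcases h1 with h1 | h1 | h1
    · exact h1
    · linarith
    · linarith
  subst ht
  simp at h2
  rcases h2 with h2 | h2
  · exact ⟨h2, rfl⟩
  · linarith

/-- The period pair of the lattice. -/
def EL (ω : ℝ) (hω : 0 < ω) : PeriodPair := ⟨ω, ω * tau, tau_indep ω hω⟩

def tauH : UpperHalfPlane := ⟨tau, tau_im_pos⟩

lemma tauH_coe : (tauH : ℂ) = tau := rfl

lemma tendsto_aux (ω : ℝ) (hω : 0 < ω) (c : ℂ) :
    Tendsto (fun n : ℤ => 1 / (c - (n : ℂ) * ω)) (cofinite) (𝓝 0) := by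
  have h1 : Tendsto (fun n : ℤ => ‖c - (n : ℂ) * ω‖) cofinite atTop := by
    have h2 : Tendsto (fun n : ℤ => ‖(n : ℝ)‖ * ω - ‖c‖) cofinite atTop := by
      refine tendsto_atTop_add_const_right _ _ (Tendsto.atTop_mul_const hω ?_)
      have := Int.isClosedEmbedding_coe_real.tendsto_cocompact
      rw [cocompact_eq_cofinite] at this
      exact (tendsto_norm_cocompact_atTop).comp this
    refine tendsto_atTop_mono (fun n => ?_) h2
    have := norm_sub_norm_le ((n : ℂ) * ω) c
    rw [norm_sub_rev] at this
    refine le_trans (le_of_eq ?_) this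
    simp [abs_of_pos hω]
  simp only [one_div]
  exact tendsto_inv₀_cobounded.comp (tendsto_norm_atTop_iff_cobounded.mp h1)

lemma telescope (f : ℤ → ℂ) (hf : Tendsto f cofinite (𝓝 0))
    (hs : Summable fun n => f n - f (n + 1)) : ∑' n, (f n - f (n + 1)) = 0 := by
  have h1 : HasSum (fun n => f n - f (n + 1)) _ (SummationFilter.symmetricIco ℤ) :=
    Tendsto.mono_left hs.hasSum SummationFilter.LeAtTop.le_atTop
  rw [SummationFilter.hasSum_symmetricIco_int_iff] at h1
  simp only [Finset.sum_Ico_int_sub] at h1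
  have c1 : Tendsto (fun N : ℕ => (N : ℤ)) atTop cofinite := by
    rw [← Nat.cofinite_eq_atTop]
    exact (Nat.cast_injective).tendsto_cofinite
  have c2 : Tendsto (fun N : ℕ => (-N : ℤ)) atTop cofinite :=
    (neg_injective.tendsto_cofinite).comp c1
  have h2 := (hf.comp c2).sub (hf.comp c1)
  simp only [sub_zero] at h2
  exact tendsto_nhds_unique h1 h2

lemma G2_tau : G2 tauH = 2 * Real.pi / Real.sqrt 3 := by
  have h1 := G2_S_transform tauH
  have hS : ModularGroup.S • tauH = (1 : ℝ) +ᵥ tauH := by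
    rw [UpperHalfPlane.modular_S_smul]
    apply UpperHalfPlane.ext
    rw [UpperHalfPlane.coe_vadd]
    change (-tau)⁻¹ = ((1 : ℝ) : ℂ) + tau
    apply inv_eq_of_mul_eq_one_right
    push_cast
    linear_combination -tau_sq
  have h2 : G2 ((1 : ℝ) +ᵥ tauH) = G2 tauH := by
    rw [G2_eq_tsum_cexp, G2_eq_tsum_cexp]
    congr 2
    refine tsum_congr fun n => ?_
    congr 2
    rw [UpperHalfPlane.coe_vadd]
    rw [show 2 * (π:ℂ) * I * ((1:ℝ) + (tauH:ℂ)) = 2 * π * I * tauH + 2 * π * I by push_cast; ring]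
    rw [Complex.exp_add, Complex.exp_two_pi_mul_I, mul_one]
  rw [hS, h2, tauH_coe] at h1
  have ht := tau_ne
  have h3 : (Real.sqrt 3 : ℂ) ≠ 0 := by
    intro h; have := sqrt3_sq; rw [h] at this; norm_num at this
  have hd : (1 + 2 * tau) = Real.sqrt 3 * I := by unfold tau; ring
  field_simp at h1
  rw [eq_div_iff h3]
  have h4 : G2 tauH * (tau ^ 2 - 1) = 2 * π * I * tau := by linear_combination h1
  have h5 : tau ^ 2 - 1 = tau * (Real.sqrt 3 * I) := by
    rw [← hd]; linear_combination -tau_sq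
  rw [h5] at h4
  have : (G2 tauH * Real.sqrt 3) * (tau * I) = (2 * π) * (tau * I) := by linear_combination h4
  exact mul_right_cancel₀ (mul_ne_zero ht I_ne_zero) this

lemma e2sum (hs : Summable fun m : ℤ => e2Summand m tauH) :
    ∑' m, e2Summand m tauH = 2 * Real.pi / Real.sqrt 3 := by
  rw [← G2_tau, G2]
  exact (tsum_eq_of_summable_unconditional hs).symm

lemma zt_add_omega (ω : ℝ) (hω : 0 < ω) (z : ℂ) :
    zt (EL ω hω) (z + ω) = zt (EL ω hω) z + 2 * Real.pi / Real.sqrt 3 / ω := by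
  set L := EL ω hω with hL
  have hω' : (ω : ℂ) ≠ 0 := by exact_mod_cast hω.ne'
  have s1 := (summable_zt L (z + ω)).sub (summable_zt L z)
  have t1 : zt L (z + ω) - zt L z = ∑' l : L.lattice, (term l.1 (z + ω) - term l.1 z) := by
    rw [zt, zt, (summable_zt L (z + ω)).tsum_sub (summable_zt L z)]
  let e : ℤ × ℤ ≃ L.lattice := (Equiv.prodComm ℤ ℤ).trans L.latticeEquivProd.symm.toEquiv
  have he : ∀ p : ℤ × ℤ, ((e p : L.lattice) : ℂ) = p.2 * ω + p.1 * (ω * tau) := fun p =>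
    L.latticeEquiv_symm_apply (p.2, p.1)
  rw [← e.tsum_eq] at t1
  have s2 := e.summable_iff.mpr s1
  let f : ℤ → ℤ → ℂ := fun b a => 1 / ((z + ω - b * (ω * tau)) - a * ω)
  have hterm : ∀ b a : ℤ, term (e (b, a)) (z + ω) - term (e (b, a)) z =
      (f b a - f b (a + 1)) + (ω : ℂ)⁻¹ * eisSummand 2 ![b, a] tauH := by
    intro b a
    have h1 : (ω : ℂ)⁻¹ * eisSummand 2 ![b, a] tauH = ω / (e (b, a) : ℂ) ^ 2 := by
      rw [he]
      simp only [eisSummand, Matrix.cons_val_zero, Matrix.cons_val_one, tauH_coe]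
      rw [show ((a : ℂ) * ω + b * (ω * tau)) = ω * (b * tau + a) by ring, mul_pow]
      rw [show (-2 : ℤ) = -((2 : ℕ) : ℤ) by norm_num, zpow_neg, zpow_natCast]
      generalize ((b * tau + a : ℂ) ^ 2) = x
      by_cases hx : x = 0
      · simp [hx]
      · field_simp
    rw [h1]
    simp only [term, f, he]
    rw [show z + ω - (b : ℂ) * (ω * tau) - a * ω = z + ω - (a * ω + b * (ω * tau)) by ring]
    rw [show z + ω - (b : ℂ) * (ω * tau) - ((a + 1 : ℤ) : ℂ) * ω
      = z - (a * ω + b * (ω * tau)) by push_cast; ring]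
    ring
  have s3 : ∀ b, Summable fun a => f b a - f b (a + 1) := by
    intro b
    have h1 := s2.prod_factor b
    have h2 := (e2Summand_summable b tauH).mul_left (ω : ℂ)⁻¹
    refine (h1.sub h2).congr fun a => ?_
    have := hterm b a
    simp only [Function.comp]
    rw [this]
    ring
  have inner : ∀ b, ∑' a, (term (e (b, a)) (z + ω) - term (e (b, a)) z) =
      (ω : ℂ)⁻¹ * e2Summand b tauH := by
    intro b
    simp_rw [hterm]
    rw [(s3 b).tsum_add ((e2Summand_summable b tauH).mul_left _), tsum_mul_left,
      telescope (f b) (tendsto_aux ω hω _) (s3 b), zero_add, e2Summand]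
  have s4 : Summable fun b : ℤ => e2Summand b tauH := by
    have := s2.prod.mul_left (ω : ℂ)
    refine this.congr fun b => ?_
    have := inner b
    simp only [Function.comp]
    rw [this]
    field_simp
  have t2 := s2.tsum_prod
  simp only [Function.comp] at t2
  rw [t2] at t1
  simp_rw [inner] at t1
  rw [tsum_mul_left, e2sum s4] at t1
  rw [sub_eq_iff_eq_add] at t1
  rw [t1]
  ring

end WZ

namespace WZ

open Filter Topology PeriodPair

variable (ω : ℝ) (hω : 0 < ω)

lemma tau_cube : tau ^ 3 = 1 := by linear_combination (tau - 1) * tau_sq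

lemma conj_tau : conj tau = -1 - tau := by
  apply Complex.ext <;> simp [tau_re, tau_im] <;> ring

lemma mem_EL (z : ℂ) : z ∈ (EL ω hω).lattice ↔ ∃ m n : ℤ, z = ω * (m + n * tau) := by
  rw [PeriodPair.mem_lattice]
  refine exists_congr fun m => exists_congr fun n => ?_
  change (m : ℂ) * ω + n * (ω * tau) = z ↔ _
  constructor
  · intro h; rw [← h]; ring
  · intro h; rw [h]; ring

lemma Eis_iff (a : ℂ) : a ∈ Eis ↔ ∃ m n : ℤ, a = m + n * tau := by
  constructor
  · intro h
    induction h using Subring.closure_induction with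
    | mem x hx => exact ⟨0, 1, by rw [Set.mem_singleton_iff.mp hx]; simp⟩
    | zero => exact ⟨0, 0, by simp⟩
    | one => exact ⟨1, 0, by simp⟩
    | add x y _ _ hx hy =>
      obtain ⟨m, n, rfl⟩ := hx
      obtain ⟨k, l, rfl⟩ := hy
      exact ⟨m + k, n + l, by push_cast; ring⟩
    | neg x _ hx =>
      obtain ⟨m, n, rfl⟩ := hx
      exact ⟨-m, -n, by push_cast; ring⟩
    | mul x y _ _ hx hy =>
      obtain ⟨m, n, rfl⟩ := hx
      obtain ⟨k, l, rfl⟩ := hy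
      exact ⟨m * k - n * l, m * l + n * k - n * l, by
        push_cast; linear_combination (n * l : ℂ) * tau_sq⟩
  · rintro ⟨m, n, rfl⟩
    exact add_mem (intCast_mem _ m) (mul_mem (intCast_mem _ n) (Subring.subset_closure rfl))

lemma inLattice_iff (z : ℂ) : inLattice ω z ↔ z ∈ (EL ω hω).lattice := by
  rw [mem_EL]
  constructor
  · rintro ⟨a, rfl⟩
    obtain ⟨m, n, h⟩ := (Eis_iff a).mp a.2
    exact ⟨m, n, by rw [h]⟩
  · rintro ⟨m, n, rfl⟩
    exact ⟨⟨_, (Eis_iff _).mpr ⟨m, n, rfl⟩⟩, rfl⟩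

lemma tsum_split (F : ℂ → ℂ) (hF : Summable fun l : (EL ω hω).lattice => F l) :
    ∑' l : (EL ω hω).lattice, F l = F 0 + ∑' a : {w : ℂ // inLattice ω w ∧ w ≠ 0}, F a := by
  have h1 : ∑' l : (EL ω hω).lattice, F l =
      ∑' x, ((EL ω hω).lattice : Set ℂ).indicator F x := tsum_subtype _ _
  have h2 : ∑' a : {w : ℂ // inLattice ω w ∧ w ≠ 0}, F a =
      ∑' x, {w : ℂ | inLattice ω w ∧ w ≠ 0}.indicator F x := tsum_subtype _ _
  have h3 : Summable (((EL ω hω).lattice : Set ℂ).indicator F) :=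
    summable_subtype_iff_indicator.mp hF
  rw [h1, h2, h3.tsum_eq_add_tsum_ite 0]
  congr 1
  · simp
  · refine tsum_congr fun x => ?_
    by_cases hx : x = 0
    · rw [if_pos hx, Set.indicator_of_notMem]
      exact fun h => h.2 hx
    · rw [if_neg hx]
      by_cases hm : x ∈ (EL ω hω).lattice
      · rw [Set.indicator_of_mem hm, Set.indicator_of_mem]
        exact ⟨(inLattice_iff ω hω x).mpr hm, hx⟩
      · rw [Set.indicator_of_notMem hm, Set.indicator_of_notMem]
        exact fun h => hm ((inLattice_iff ω hω x).mp h.1)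

lemma wp_eq (z : ℂ) : wp ω z = weierstrassP (EL ω hω) z := by
  rw [weierstrassP, tsum_split ω hω (fun l => 1 / (z - l) ^ 2 - 1 / l ^ 2)
    ((EL ω hω).hasSum_weierstrassP z).summable, wp]
  simp

lemma wzeta_eq (z : ℂ) : wzeta ω z = zt (EL ω hω) z := by
  rw [zt, tsum_split ω hω (fun l => term l z) (summable_zt _ z), wzeta]
  simp [term]

lemma tau_mul_mem {z : ℂ} (h : z ∈ (EL ω hω).lattice) : tau * z ∈ (EL ω hω).lattice := by
  rw [mem_EL] at *
  obtain ⟨m, n, rfl⟩ := h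
  exact ⟨-n, m - n, by push_cast; linear_combination (ω * n : ℂ) * tau_sq⟩

lemma conj_mem {z : ℂ} (h : z ∈ (EL ω hω).lattice) : conj z ∈ (EL ω hω).lattice := by
  rw [mem_EL] at *
  obtain ⟨m, n, rfl⟩ := h
  exact ⟨m - n, -n, by
    simp only [map_mul, map_add, Complex.conj_ofReal, map_intCast, conj_tau]; push_cast; ring⟩

def tauEquiv : (EL ω hω).lattice ≃ (EL ω hω).lattice where
  toFun l := ⟨tau * l, tau_mul_mem ω hω l.2⟩
  invFun l := ⟨tau * (tau * l), tau_mul_mem ω hω (tau_mul_mem ω hω l.2)⟩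
  left_inv l := by
    ext; simp only; linear_combination (l : ℂ) * tau_cube
  right_inv l := by
    ext; simp only; linear_combination (l : ℂ) * tau_cube

def conjEquiv : (EL ω hω).lattice ≃ (EL ω hω).lattice where
  toFun l := ⟨conj l, conj_mem ω hω l.2⟩
  invFun l := ⟨conj l, conj_mem ω hω l.2⟩
  left_inv l := by ext; simp
  right_inv l := by ext; simp

lemma tau_inv : tau⁻¹ = tau ^ 2 := by
  apply inv_eq_of_mul_eq_one_right
  linear_combination tau_cube

lemma zt_tau (z : ℂ) : zt (EL ω hω) (tau * z) = tau ^ 2 * zt (EL ω hω) z := by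
  rw [zt, zt, ← (tauEquiv ω hω).tsum_eq, ← tsum_mul_left]
  refine tsum_congr fun l => ?_
  change term (tau * l) (tau * z) = _
  simp only [term, ← tau_inv, ← mul_sub]
  generalize z - (l : ℂ) = x
  generalize (l : ℂ) = y
  have := tau_ne
  rw [one_div, one_div, one_div, one_div, mul_inv, mul_inv, div_eq_mul_inv, div_eq_mul_inv,
    mul_pow, mul_inv]
  field_simp

lemma P_tau (z : ℂ) : weierstrassP (EL ω hω) (tau * z) = tau * weierstrassP (EL ω hω) z := by
  rw [weierstrassP, weierstrassP, ← (tauEquiv ω hω).tsum_eq, ← tsum_mul_left]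
  refine tsum_congr fun l => ?_
  change 1 / (tau * z - tau * (l : ℂ)) ^ 2 - 1 / (tau * (l : ℂ)) ^ 2 = _
  simp only [← mul_sub]
  generalize z - (l : ℂ) = x
  generalize (l : ℂ) = y
  have h : (tau ^ 2)⁻¹ = tau := by rw [← tau_inv, inv_inv]
  rw [one_div, one_div, one_div, one_div, mul_pow, mul_pow, mul_inv, mul_inv, h]
  ring

lemma P_conj (z : ℂ) :
    weierstrassP (EL ω hω) (conj z) = conj (weierstrassP (EL ω hω) z) := by
  rw [weierstrassP, weierstrassP, ← (conjEquiv ω hω).tsum_eq, Complex.conj_tsum]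
  refine tsum_congr fun l => ?_
  change 1 / (conj z - conj (l : ℂ)) ^ 2 - 1 / (conj (l : ℂ)) ^ 2 = _
  simp

lemma P'_conj (z : ℂ) :
    derivWeierstrassP (EL ω hω) (conj z) = conj (derivWeierstrassP (EL ω hω) z) := by
  rw [derivWeierstrassP, derivWeierstrassP, ← (conjEquiv ω hω).tsum_eq, map_neg, Complex.conj_tsum]
  congr 1
  refine tsum_congr fun l => ?_
  change 2 / (conj z - conj (l : ℂ)) ^ 3 = _
  rw [map_div₀, map_pow, map_sub, Complex.conj_ofNat]

lemma P_real (x : ℝ) : ∃ y : ℝ, weierstrassP (EL ω hω) x = y := by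
  have := P_conj ω hω x
  rw [Complex.conj_ofReal] at this
  obtain ⟨y, hy⟩ := Complex.conj_eq_iff_real.mp this.symm
  exact ⟨y, hy⟩

lemma P'_real (x : ℝ) : ∃ y : ℝ, derivWeierstrassP (EL ω hω) x = y := by
  have := P'_conj ω hω x
  rw [Complex.conj_ofReal] at this
  obtain ⟨y, hy⟩ := Complex.conj_eq_iff_real.mp this.symm
  exact ⟨y, hy⟩

lemma rat_mem (a b : ℚ) (h : (ω : ℂ) * (a + b * tau) ∈ (EL ω hω).lattice) :
    a.den = 1 ∧ b.den = 1 := by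
  rw [← PeriodPair.mul_ω₁_add_mul_ω₂_mem_lattice (L := EL ω hω)]
  convert h using 1
  change (a : ℂ) * ω + b * (ω * tau) = _
  ring

lemma real_notMem (x : ℝ) (h0 : 0 < x) (h1 : x < ω) : (x : ℂ) ∉ (EL ω hω).lattice := by
  rw [mem_EL]
  rintro ⟨m, n, h⟩
  have hi := congrArg Complex.im h
  have hr := congrArg Complex.re h
  have := tau_im_pos
  simp at hi hr
  have hn : n = 0 := by
    rcases hi with hi | hi | hi
    · linarith
    · exact hi
    · linarith
  subst hn
  simp at hr
  rw [hr] at h0 h1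
  have a1 : (0 : ℝ) < m := pos_of_mul_pos_right h0 hω.le
  have a2 : (m : ℝ) < 1 := by
    by_contra hc
    push Not at hc
    nlinarith
  have a3 : 0 < m := by exact_mod_cast a1
  have a4 : m < 1 := by exact_mod_cast a2
  omega

end WZ

namespace WZ

open Filter Topology PeriodPair

variable (ω : ℝ) (hω : 0 < ω)

def eta (ω : ℝ) : ℂ := 2 * Real.pi / Real.sqrt 3 / ω

lemma one_sub_tau_ne : (1 - tau) ≠ 0 := by
  intro h
  have h1 := congrArg Complex.im h
  have := tau_im_pos
  simp at h1
  linarith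

lemma omega_mem : (ω : ℂ) ∈ (EL ω hω).lattice := (EL ω hω).ω₁_mem_lattice

lemma omega_tau_mem : (ω : ℂ) * tau ∈ (EL ω hω).lattice := (EL ω hω).ω₂_mem_lattice

lemma zt_add_omega_tau (z : ℂ) :
    zt (EL ω hω) (z + ω * tau) = zt (EL ω hω) z + tau ^ 2 * eta ω := by
  have h1 : z + ω * tau = tau * (tau * (tau * z) + ω) := by
    linear_combination -z * tau_cube
  rw [h1, zt_tau, zt_add_omega, zt_tau, zt_tau, eta]
  linear_combination zt (EL ω hω) z * (tau ^ 3 + 1) * tau_cube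

def ww (ω : ℝ) : ℂ := ω * ((1 / 3 : ℚ) + (-1 / 3 : ℚ) * tau)

lemma tau_ww : tau * ww ω = ww ω + ω * tau := by
  unfold ww; push_cast
  linear_combination (-ω / 3 : ℂ) * tau_sq

lemma ww_notMem : ww ω ∉ (EL ω hω).lattice := by
  intro h
  have := (rat_mem ω hω _ _ h).1
  norm_num at this

lemma P_ww : weierstrassP (EL ω hω) (ww ω) = 0 := by
  have h1 := P_tau ω hω (ww ω)
  have h2 := (EL ω hω).weierstrassP_add_coe (ww ω) ⟨_, omega_tau_mem ω hω⟩
  simp only at h2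
  rw [tau_ww, h2] at h1
  have h3 : (1 - tau) * weierstrassP (EL ω hω) (ww ω) = 0 := by linear_combination h1
  exact (mul_eq_zero.mp h3).resolve_left one_sub_tau_ne

lemma zt_ww : (1 - tau) * zt (EL ω hω) (ww ω) = eta ω := by
  have h1 := zt_tau ω hω (ww ω)
  rw [tau_ww, zt_add_omega_tau] at h1
  linear_combination -tau * h1 - (zt (EL ω hω) (ww ω) - eta ω) * tau_cube

lemma tau_mul_mem_iff (z : ℂ) : tau * z ∈ (EL ω hω).lattice ↔ z ∈ (EL ω hω).lattice := by
  constructor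
  · intro h
    have := tau_mul_mem ω hω (tau_mul_mem ω hω h)
    rwa [show tau * (tau * (tau * z)) = z by linear_combination z * tau_cube] at this
  · exact tau_mul_mem ω hω

lemma cm_formula (z : ℂ) (hz : z ∉ (EL ω hω).lattice) (hz' : (1 - tau) * z ∉ (EL ω hω).lattice) :
    (zt (EL ω hω) ((1 - tau) * z) - (2 + tau) * zt (EL ω hω) z) *
      ((1 - tau) * weierstrassP (EL ω hω) z) = derivWeierstrassP (EL ω hω) z := by
  have e1 : z + tau * z = -(tau * (tau * z)) := by linear_combination z * tau_sq
  have e2 : z + -(tau * z) = (1 - tau) * z := by ring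
  have h := zeta_formula (EL ω hω) (tau * z) z (by rwa [tau_mul_mem_iff]) hz
    (by rw [e1, neg_mem_iff, tau_mul_mem_iff, tau_mul_mem_iff]; exact hz) (by rwa [e2])
  rw [e1, e2, zt_neg, zt_tau, zt_tau, P_tau] at h
  rw [← h]
  linear_combination (tau * zt (EL ω hω) z * (1 - tau) * weierstrassP (EL ω hω) z) * tau_cube

/-- The Weierstrass equation with invariants 0 and 1. -/
def HasODE (ω : ℝ) (hω : 0 < ω) : Prop :=
  ∀ z ∉ (EL ω hω).lattice, derivWeierstrassP (EL ω hω) z ^ 2 =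
    4 * weierstrassP (EL ω hω) z ^ 3 - 1

lemma P_hasDeriv (z : ℂ) (hz : z ∉ (EL ω hω).lattice) :
    HasDerivAt (weierstrassP (EL ω hω)) (derivWeierstrassP (EL ω hω) z) z := by
  rw [← (EL ω hω).deriv_weierstrassP]
  exact ((EL ω hω).analyticOnNhd_weierstrassP z hz).differentiableAt.hasDerivAt

lemma Q_hasDeriv (hP : HasODE ω hω) (z : ℂ) (hz : z ∉ (EL ω hω).lattice) :
    HasDerivAt (derivWeierstrassP (EL ω hω)) (6 * weierstrassP (EL ω hω) z ^ 2) z := by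
  set P := weierstrassP (EL ω hω)
  set Q := derivWeierstrassP (EL ω hω)
  have aP : AnalyticOnNhd ℂ P ((EL ω hω).lattice : Set ℂ)ᶜ := (EL ω hω).analyticOnNhd_weierstrassP
  have aQ : AnalyticOnNhd ℂ Q ((EL ω hω).lattice : Set ℂ)ᶜ :=
    (EL ω hω).analyticOnNhd_derivWeierstrassP
  have hopen : IsOpen ((EL ω hω).lattice : Set ℂ)ᶜ := (EL ω hω).isClosed_lattice.isOpen_compl
  have hQ : ∀ z ∈ ((EL ω hω).lattice : Set ℂ)ᶜ, HasDerivAt Q (deriv Q z) z :=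
    fun z hz => (aQ z hz).differentiableAt.hasDerivAt
  have hmul : ∀ z ∈ ((EL ω hω).lattice : Set ℂ)ᶜ,
      Q z * (fun z => deriv Q z - 6 * P z ^ 2) z = 0 := by
    intro z hz
    have h1 := (hQ z hz).pow 2
    have h2 := (((P_hasDeriv ω hω z hz).pow 3).const_mul 4).sub_const 1
    have heq : Q ^ 2 =ᶠ[𝓝 z] fun z => 4 * (P ^ 3) z - 1 := by
      filter_upwards [hopen.mem_nhds hz] with y hy using hP y hy
    have h3 := (h2.congr_of_eventuallyEq heq).unique h1
    simp at h3
    change Q z * (deriv Q z - 6 * P z ^ 2) = 0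
    linear_combination (-1/2 : ℂ) * h3
  rcases aQ.eq_zero_or_eq_zero_of_mul_eq_zero
    (aQ.deriv.sub (analyticOnNhd_const.mul (aP.pow 2))) hmul (isPreconnected_compl _) with h | h
  · exfalso
    have h1 := h _ (ww_notMem ω hω)
    have h2 := hP _ (ww_notMem ω hω)
    change Q (ww ω) ^ 2 = _ at h2
    rw [h1, P_ww] at h2
    norm_num at h2
  · have := hQ z hz
    rwa [sub_eq_zero.mp (h z hz)] at this

lemma third_notMem : ((ω / 3 : ℝ) : ℂ) ∉ (EL ω hω).lattice :=
  real_notMem ω hω _ (by linarith) (by linarith)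

lemma half_notMem : ((ω / 2 : ℝ) : ℂ) ∉ (EL ω hω).lattice :=
  real_notMem ω hω _ (by linarith) (by linarith)

lemma ww_eq : (1 - tau) * ((ω / 3 : ℝ) : ℂ) = ww ω := by
  unfold ww; push_cast; ring

lemma cm_third : (eta ω - 3 * zt (EL ω hω) ((ω / 3 : ℝ) : ℂ)) *
    weierstrassP (EL ω hω) ((ω / 3 : ℝ) : ℂ) = derivWeierstrassP (EL ω hω) ((ω / 3 : ℝ) : ℂ) := by
  have h := cm_formula ω hω _ (third_notMem ω hω) (by rw [ww_eq]; exact ww_notMem ω hω)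
  rw [ww_eq] at h
  rw [← h, ← zt_ww ω hω]
  linear_combination -zt (EL ω hω) ((ω / 3 : ℝ) : ℂ) *
    weierstrassP (EL ω hω) ((ω / 3 : ℝ) : ℂ) * tau_sq

lemma P_third_cube (hP : HasODE ω hω) : weierstrassP (EL ω hω) ((ω / 3 : ℝ) : ℂ) ^ 3 = 1 := by
  have hu := third_notMem ω hω
  have hw := ww_notMem ω hω
  have hX := cm_third ω hω
  have hPu := hP _ hu
  set u : ℂ := ((ω / 3 : ℝ) : ℂ) with hu_def
  have hwu : (1 - tau) * u = ww ω := ww_eq ω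
  have hopen : IsOpen ((EL ω hω).lattice : Set ℂ)ᶜ := (EL ω hω).isClosed_lattice.isOpen_compl
  have hcont : ContinuousAt (fun z : ℂ => (1 - tau) * z) u := by fun_prop
  have hev : (fun z => (zt (EL ω hω) ((1 - tau) * z) - (2 + tau) * zt (EL ω hω) z) *
      ((1 - tau) * weierstrassP (EL ω hω) z)) =ᶠ[𝓝 u] derivWeierstrassP (EL ω hω) := by
    have n2 : ∀ᶠ z in 𝓝 u, (1 - tau) * z ∈ ((EL ω hω).lattice : Set ℂ)ᶜ :=
      hcont.eventually (hopen.mem_nhds (by change (1 - tau) * u ∈ _; rw [hwu]; exact hw))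
    filter_upwards [hopen.mem_nhds hu, n2] with z h1 h2 using cm_formula ω hω z h1 h2
  have d1 : HasDerivAt (fun z => zt (EL ω hω) ((1 - tau) * z))
      (-weierstrassP (EL ω hω) (ww ω) * (1 - tau)) u := by
    have a := hasDerivAt_zt (EL ω hω) ((1 - tau) * u) (by rw [hwu]; exact hw)
    have b : HasDerivAt (fun z : ℂ => (1 - tau) * z) (1 - tau) u := by
      simpa using (hasDerivAt_id u).const_mul (1 - tau)
    rw [← hwu]
    exact a.comp u b
  have d2 := (d1.sub ((hasDerivAt_zt (EL ω hω) u hu).const_mul (2 + tau))).mul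
    ((P_hasDeriv ω hω u hu).const_mul (1 - tau))
  have d3 := (Q_hasDeriv ω hω hP u hu).congr_of_eventuallyEq hev
  have h := d2.unique d3
  rw [P_ww] at h
  simp only [Pi.sub_apply] at h
  rw [hwu] at h
  have hz := zt_ww ω hω
  set p := weierstrassP (EL ω hω) u
  set q := derivWeierstrassP (EL ω hω) u
  set s := zt (EL ω hω) u
  have h2 : 3 * p ^ 2 + (eta ω - 3 * s) * q = 6 * p ^ 2 := by
    rw [← hz, ← h]
    linear_combination (p ^ 2 - s * q) * tau_sq
  linear_combination p * h2 - q * hX - hPu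

lemma P_third (hP : HasODE ω hω) : weierstrassP (EL ω hω) ((ω / 3 : ℝ) : ℂ) = 1 := by
  obtain ⟨y, hy⟩ := P_real ω hω (ω / 3)
  have h := P_third_cube ω hω hP
  rw [hy] at *
  have h1 : y ^ 3 = 1 ^ 3 := by rw [one_pow]; exact_mod_cast h
  have h2 : y = 1 := (Odd.strictMono_pow (by decide : Odd 3)).injective h1
  rw [h2]; simp

lemma Q_half : derivWeierstrassP (EL ω hω) ((ω / 2 : ℝ) : ℂ) = 0 := by
  have h1 := (EL ω hω).derivWeierstrassP_neg ((ω / 2 : ℝ) : ℂ)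
  have h2 := (EL ω hω).derivWeierstrassP_add_coe (-((ω / 2 : ℝ) : ℂ)) ⟨_, omega_mem ω hω⟩
  simp only at h2
  rw [show -((ω / 2 : ℝ) : ℂ) + ω = ((ω / 2 : ℝ) : ℂ) by push_cast; ring, h1] at h2
  linear_combination (1/2 : ℂ) * h2

lemma P_half (hP : HasODE ω hω) : weierstrassP (EL ω hω) ((ω / 2 : ℝ) : ℂ) = cbrt2 / 2 := by
  obtain ⟨y, hy⟩ := P_real ω hω (ω / 2)
  have h := hP _ (half_notMem ω hω)
  rw [Q_half, hy] at h
  rw [hy, cbrt2]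
  have h1 : 4 * y ^ 3 = 1 := by
    have : (4 : ℂ) * y ^ 3 = 1 := by linear_combination -h
    exact_mod_cast this
  have h2 : ((2 : ℝ) ^ ((1 : ℝ) / 3)) ^ 3 = 2 := by
    rw [← Real.rpow_natCast, ← Real.rpow_mul (by norm_num)]; norm_num
  have h3 : (2 * y) ^ 3 = ((2 : ℝ) ^ ((1 : ℝ) / 3)) ^ 3 := by rw [h2]; linarith
  have h4 := (Odd.strictMono_pow (by decide : Odd 3)).injective h3
  rw [← h4]
  push_cast
  ring

lemma Q_third (hP : HasODE ω hω) : derivWeierstrassP (EL ω hω) ((ω / 3 : ℝ) : ℂ) = -(Real.sqrt 3 : ℂ) := by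
  obtain ⟨y, hy⟩ := P'_real ω hω (ω / 3)
  have h := hP _ (third_notMem ω hω)
  rw [P_third ω hω hP, hy] at h
  have h1 : y ^ 2 = 3 := by
    have : (y : ℂ) ^ 2 = 3 := by rw [h]; norm_num
    exact_mod_cast this
  have hd : ∀ x ∈ Set.Ioo (0 : ℝ) ω,
      HasDerivAt (fun x : ℝ => (derivWeierstrassP (EL ω hω) x).re)
        (6 * weierstrassP (EL ω hω) x ^ 2).re x := fun x hx =>
    (Q_hasDeriv ω hω hP x (real_notMem ω hω x hx.1 hx.2)).real_of_complex
  have hm : MonotoneOn (fun x : ℝ => (derivWeierstrassP (EL ω hω) x).re) (Set.Ioo (0 : ℝ) ω) := by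
    refine monotoneOn_of_deriv_nonneg (convex_Ioo 0 ω)
      (fun x hx => (hd x hx).continuousAt.continuousWithinAt)
      (fun x hx => ?_) (fun x hx => ?_)
    · rw [interior_Ioo] at hx
      exact (hd x hx).differentiableAt.differentiableWithinAt
    · rw [interior_Ioo] at hx
      rw [(hd x hx).deriv]
      obtain ⟨p, hp⟩ := P_real ω hω x
      rw [hp]
      have : (6 * (p : ℂ) ^ 2).re = 6 * p ^ 2 := by
        rw [show (6 * (p : ℂ) ^ 2) = ((6 * p ^ 2 : ℝ) : ℂ) by push_cast; ring, Complex.ofReal_re]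
      rw [this]
      positivity
  have h2 := hm (a := ω / 3) (b := ω / 2) ⟨by linarith, by linarith⟩ ⟨by linarith, by linarith⟩
    (by linarith)
  simp only [Q_half, hy, Complex.ofReal_re, Complex.zero_re] at h2
  rw [hy, ← Complex.ofReal_neg]
  congr 1
  have h3 : Real.sqrt 3 = -y := by
    rw [← h1, Real.sqrt_sq_eq_abs, abs_of_nonpos h2]
  linarith

lemma main (hP : HasODE ω hω) : zt (EL ω hω) (5 * (ω : ℂ) / 6) =
      5 * (Real.pi : ℂ) / (3 * (Real.sqrt 3 : ℂ) * (ω : ℂ)) + 1 / (Real.sqrt 3 : ℂ) +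
        (Real.sqrt 3 : ℂ) / (cbrt2 - 2) := by
  have hω' : (ω : ℂ) ≠ 0 := by exact_mod_cast hω.ne'
  have h3 : (Real.sqrt 3 : ℂ) ≠ 0 := by
    intro h; have := sqrt3_sq; rw [h] at this; norm_num at this
  have e1 : ((ω / 3 : ℝ) : ℂ) + ((ω / 2 : ℝ) : ℂ) = 5 * (ω : ℂ) / 6 := by push_cast; ring
  have m1 : 5 * (ω : ℂ) / 6 ∉ (EL ω hω).lattice := by
    have := real_notMem ω hω (5 * ω / 6) (by linarith) (by linarith)
    push_cast at this
    exact this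
  have e2 : ((ω / 3 : ℝ) : ℂ) + -((ω / 2 : ℝ) : ℂ) + ω = 5 * (ω : ℂ) / 6 := by push_cast; ring
  have m2 : ((ω / 3 : ℝ) : ℂ) + -((ω / 2 : ℝ) : ℂ) ∉ (EL ω hω).lattice := by
    intro h
    exact m1 (e2 ▸ add_mem h (omega_mem ω hω))
  have h := zeta_formula (EL ω hω) ((ω / 2 : ℝ) : ℂ) ((ω / 3 : ℝ) : ℂ) (half_notMem ω hω)
    (third_notMem ω hω) (by rwa [e1]) m2
  have hz := zt_add_omega ω hω (((ω / 3 : ℝ) : ℂ) + -((ω / 2 : ℝ) : ℂ))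
  have hc := cm_third ω hω
  rw [e2] at hz
  rw [e1, P_third ω hω hP, P_half ω hω hP, Q_third ω hω hP] at h
  rw [P_third ω hω hP, Q_third ω hω hP] at hc
  have hcb : cbrt2 - 2 ≠ 0 := by
    intro h0
    have : (1 : ℂ) - cbrt2 / 2 = 0 := by linear_combination (-1/2 : ℂ) * h0
    rw [this, mul_zero] at h
    exact h3 (by linear_combination h)
  set Z := zt (EL ω hω) (5 * (ω : ℂ) / 6)
  set s := zt (EL ω hω) ((ω / 3 : ℝ) : ℂ)
  set t := zt (EL ω hω) (((ω / 3 : ℝ) : ℂ) + -((ω / 2 : ℝ) : ℂ))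
  have hs : s = (eta ω + Real.sqrt 3) / 3 := by linear_combination (-1/3 : ℂ) * hc
  have ht : t = Z - eta ω := by rw [hz, eta]; ring
  rw [hs, ht] at h
  have hZ : Z = eta ω * (5 / 6) + Real.sqrt 3 / 3 + Real.sqrt 3 / (cbrt2 - 2) := by
    have : Real.sqrt 3 / (cbrt2 - 2) = Z - eta ω * (5 / 6) - Real.sqrt 3 / 3 := by
      rw [div_eq_iff hcb]
      linear_combination h
    rw [this]; ring
  have h33 : (1 : ℂ) / Real.sqrt 3 = Real.sqrt 3 / 3 := by
    rw [div_eq_div_iff h3 (by norm_num)]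
    linear_combination -sqrt3_sq
  rw [hZ, h33, eta]
  field_simp
  ring

end WZ

/-- From [Qiu], (2.8): `ζ(5ω/6) = 5π/(3√3·ω) + 1/√3 + √3/(∛2 − 2)`.
Here `ω > 0` is pinned down by the differential equation `℘′² = 4℘³ − 1` for the
lattice `L_ω = ω·ℤ[τ]` (equivalently, the lattice invariants are `g₂ = 0`, `g₃ = 1`). -/
theorem wzeta_value_at_five_sixths
    (ω : ℝ) (hω : 0 < ω)
    (hODE : ∀ z : ℂ, ¬ inLattice ω z → deriv (wp ω) z ^ 2 = 4 * wp ω z ^ 3 - 1) :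
    wzeta ω (5 * (ω : ℂ) / 6) =
      5 * (Real.pi : ℂ) / (3 * (Real.sqrt 3 : ℂ) * (ω : ℂ)) + 1 / (Real.sqrt 3 : ℂ) +
        (Real.sqrt 3 : ℂ) / (cbrt2 - 2) := by
  rw [WZ.wzeta_eq ω hω]
  refine WZ.main ω hω fun z hz => ?_
  have h := hODE z (by rwa [WZ.inLattice_iff ω hω])
  rw [show wp ω = PeriodPair.weierstrassP (WZ.EL ω hω) from funext (WZ.wp_eq ω hω),
    PeriodPair.deriv_weierstrassP] at h
  exact h
end
end
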